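/- Let f : Y ⇢ S be a dominant rational map between normal complex projective varieties, and let y ∈ Y be a point of codimension one. Then there exists a normal projective variety S' birational to S such that the induced dominant rational map f' : Y ⇢ S' is defined at y and maps y either to the generic point of S' or to the generic point of a divisor on S' (i.e. to a point of codimension one of S'). -/

import Mathlib

/-!
The local ring `R` of `Y` at `y` is a discrete valuation ring with fraction field `L = ℂ(Y)`, and
`f` embeds `K = ℂ(S)` into `L`. A projective model of `K` with coordinates in the valuation ring
`𝒪 = R ∩ K` receives a map defined at `y`, which sends `y` to the centre of `𝒪`.

The residue field `κ` of `𝒪` has transcendence degree at least `trdeg K - 1`. Indeed Zariski's main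
theorem gives `trdeg L ≤ trdeg κ_R + 1` for the residue field `κ_R` of `R`, while elements of `R`
whose residues are algebraically independent over `κ` are algebraically independent over `K`, so
`trdeg_κ κ_R ≤ trdeg_K L`; now subtract. Once the coordinates include lifts of a transcendence basis
of `κ`, the centre of `𝒪` therefore has codimension at most one.

The model is made normal without losing this. For a finite set `W` of generators of `K`, the
integral closure of `ℂ[x t : x ∈ W]` in `K[t]` is a finite module, and a spanning set of one of its
pieces of high degree gives projective coordinates all of whose affine charts are integrally closed.
These coordinates are integral over `ℂ[W]`, hence remain in `𝒪`.
-/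

noncomputable section
open AlgebraicGeometry MvPolynomial CategoryTheory

attribute [local instance] MvPolynomial.gradedAlgebra

/-- Projective `N`-space over `ℂ`, as `Proj ℂ[x₀,…,x_N]`. -/
abbrev ProjSpace (N : ℕ) : Scheme := Proj (homogeneousSubmodule (Fin (N+1)) ℂ)

/-- The structure morphism `ℙᴺ_ℂ → Spec ℂ`. -/
def projSpaceToSpecC (N : ℕ) : ProjSpace N ⟶ Spec (.of ℂ) :=
  Proj.toSpecZero (homogeneousSubmodule (Fin (N+1)) ℂ) ≫
    Spec.map (CommRingCat.ofHom (algebraMap ℂ ((homogeneousSubmodule (Fin (N+1)) ℂ) 0)))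

/-- A scheme is normal if all its local rings are integrally closed (domains). -/
def IsNormalScheme (X : Scheme) : Prop :=
  ∀ x : X, IsIntegrallyClosed (X.presheaf.stalk x)

/-- `X` (with structure morphism `sX`) is a complex projective variety: an integral scheme
of finite type over `ℂ` admitting a closed immersion into some `ℙᴺ_ℂ` over `ℂ`. -/
def IsProjectiveVariety (X : Scheme) (sX : X ⟶ Spec (.of ℂ)) : Prop :=
  IsIntegral X ∧ LocallyOfFiniteType sX ∧ IsProper sX ∧
    ∃ (N : ℕ) (i : X ⟶ ProjSpace N), IsClosedImmersion i ∧ i ≫ projSpaceToSpecC N = sX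

/-- A point of a scheme has codimension (at most) `c` iff its local ring has Krull
dimension (at most) `c`. -/
def ptCodim {X : Scheme} (x : X) : WithBot ℕ∞ :=
  ringKrullDim (X.presheaf.stalk x)

/-! ### Transcendence degree and height -/

section Height

universe u

variable {k B B' : Type u} [Field k] [CommRing B] [CommRing B'] [Algebra k B] [Algebra k B']

/-- The constant term of an algebraic relation for `x` over `k[b]` would be a relation between the
images of the `b i`. -/
lemma algebraicIndependent_option_of_map_eq_zero {ι : Type*} [IsDomain B] (φ : B →ₐ[k] B')
    {b : ι → B} (hb : AlgebraicIndependent k (φ ∘ b)) {x : B} (hx : φ x = 0) (hx0 : x ≠ 0) :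
    AlgebraicIndependent k (fun o : Option ι ↦ o.elim x b) := by
  rw [(hb.of_comp φ).option_iff_transcendental]
  intro halg
  obtain ⟨⟨r, hmem⟩, hr0, c, hc⟩ :=
    halg.exists_nonzero_dvd (mem_nonZeroDivisors_of_ne_zero hx0)
  rw [Algebra.adjoin_range_eq_range_aeval] at hmem
  obtain ⟨p, rfl⟩ := hmem
  change aeval b p = x * c at hc
  have hp : aeval (φ ∘ b) p = 0 := by
    change aeval (fun i ↦ φ (b i)) p = 0
    rw [← MvPolynomial.comp_aeval_apply, hc, map_mul, hx, zero_mul]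
  obtain rfl := hb.eq_zero_of_aeval_eq_zero p hp
  exact hr0 (Subtype.ext (map_zero _))

lemma trdeg_add_one_le_of_surjective [IsDomain B] [IsDomain B'] (φ : B →ₐ[k] B')
    (hφ : Function.Surjective φ) (hker : RingHom.ker φ ≠ ⊥) :
    Algebra.trdeg k B' + 1 ≤ Algebra.trdeg k B := by
  obtain ⟨x, hx, hx0⟩ := Submodule.exists_mem_ne_zero_of_ne_bot hker
  obtain ⟨ι, t, ht⟩ := exists_isTranscendenceBasis' k B'
  choose b hb using fun i ↦ hφ (t i)
  obtain rfl : φ ∘ b = t := funext hb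
  have := (algebraicIndependent_option_of_map_eq_zero φ ht.1 hx hx0).cardinalMk_le_trdeg
  rwa [Cardinal.mk_option, ht.cardinalMk_eq_trdeg] at this

lemma trdeg_quotient_add_one_le {P Q : Ideal B} [P.IsPrime] [Q.IsPrime] (hQP : Q < P) :
    Algebra.trdeg k (B ⧸ P) + 1 ≤ Algebra.trdeg k (B ⧸ Q) := by
  refine trdeg_add_one_le_of_surjective (Ideal.Quotient.factorₐ k hQP.le)
    (Ideal.Quotient.factor_surjective hQP.le) fun hker ↦ hQP.not_ge fun x hx ↦ ?_
  have : Ideal.Quotient.mk Q x ∈ RingHom.ker (Ideal.Quotient.factorₐ k hQP.le) :=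
    Ideal.Quotient.eq_zero_iff_mem.mpr hx
  rwa [hker, Ideal.mem_bot, Ideal.Quotient.eq_zero_iff_mem] at this

lemma height_le_of_trdeg_le_trdeg_quotient_add (hB : Algebra.trdeg k B < Cardinal.aleph0) (n : ℕ)
    (P : Ideal B) [P.IsPrime] (hP : Algebra.trdeg k B ≤ Algebra.trdeg k (B ⧸ P) + n) :
    P.height ≤ n := by
  induction n generalizing P with
  | zero =>
    refine Ideal.height_le_iff.mpr fun Q _ hQP ↦ ?_
    have hlt : Algebra.trdeg k (B ⧸ P) + 1 ≤ Algebra.trdeg k (B ⧸ P) :=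
      calc Algebra.trdeg k (B ⧸ P) + 1 ≤ Algebra.trdeg k (B ⧸ Q) := trdeg_quotient_add_one_le hQP
        _ ≤ Algebra.trdeg k B :=
          trdeg_le_of_surjective (Ideal.Quotient.mkₐ k Q) Ideal.Quotient.mk_surjective
        _ ≤ Algebra.trdeg k (B ⧸ P) := by simpa using hP
    have hfin : Algebra.trdeg k (B ⧸ P) < Cardinal.aleph0 :=
      (trdeg_le_of_surjective (Ideal.Quotient.mkₐ k P) Ideal.Quotient.mk_surjective).trans_lt hB
    obtain ⟨m, hm⟩ := Cardinal.lt_aleph0.mp hfin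
    rw [hm] at hlt
    exact absurd (by exact_mod_cast hlt) (Nat.not_succ_le_self m)
  | succ n ih =>
    refine Ideal.height_le_iff.mpr fun Q _ hQP ↦ ?_
    have hQ : Q.height ≤ n := ih Q <| calc
      Algebra.trdeg k B ≤ Algebra.trdeg k (B ⧸ P) + 1 + n := by
        rw [add_right_comm, add_assoc]; exact_mod_cast hP
      _ ≤ Algebra.trdeg k (B ⧸ Q) + n := by gcongr; exact trdeg_quotient_add_one_le hQP
    exact hQ.trans_lt (by exact_mod_cast n.lt_succ_self)

end Height

section ResidueField

variable {ι : Type*} (𝒪 : Type*) [CommRing 𝒪] [IsDomain 𝒪] [ValuationRing 𝒪]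
  {K : Type*} [Field K] [Algebra 𝒪 K] [IsFractionRing 𝒪 K]

lemma exists_map_eq_C_mul_and_coeff_eq_one {p : MvPolynomial ι K} (hp : p ≠ 0) :
    ∃ (c : K) (q : MvPolynomial ι 𝒪) (m : ι →₀ ℕ),
      MvPolynomial.map (algebraMap 𝒪 K) q = C c * p ∧ q.coeff m = 1 := by
  let v := ValuationRing.valuation 𝒪 K
  obtain ⟨m, hm, hmax⟩ := p.support.exists_max_image (fun n ↦ v (p.coeff n))
    (MvPolynomial.support_nonempty.mpr hp)
  have hm0 : p.coeff m ≠ 0 := MvPolynomial.mem_support_iff.mp hm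
  have hcoeff (n) : ∃ a : 𝒪, algebraMap 𝒪 K a = (C (p.coeff m)⁻¹ * p).coeff n := by
    rw [← ValuationRing.mem_integer_iff, Valuation.mem_integer_iff, coeff_C_mul, map_mul, map_inv₀,
      ← div_eq_inv_mul]
    refine div_le_one_of_le₀ ?_ zero_le
    by_cases hn : n ∈ p.support
    · exact hmax n hn
    · rw [MvPolynomial.notMem_support_iff.mp hn, map_zero]
      exact zero_le
  have hrange : C (p.coeff m)⁻¹ * p ∈ (MvPolynomial.map (algebraMap 𝒪 K)).range := by
    rw [← SetLike.mem_coe, RingHom.coe_range]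
    refine mem_range_map_iff_coeffs_subset.mpr fun a ha ↦ ?_
    obtain ⟨n, -, rfl⟩ := mem_coeffs_iff.mp ha
    exact hcoeff n
  obtain ⟨q, hq⟩ := hrange
  refine ⟨_, q, m, hq, IsFractionRing.injective 𝒪 K ?_⟩
  rw [← coeff_map, hq, coeff_C_mul, inv_mul_cancel₀ hm0, map_one]

variable {L R : Type*} [Field L] [Algebra K L] [Algebra 𝒪 L] [IsScalarTower 𝒪 K L]
  [CommRing R] [IsLocalRing R] [Algebra R L] [FaithfulSMul R L]
  [Algebra 𝒪 R] [IsScalarTower 𝒪 R L] [IsLocalHom (algebraMap 𝒪 R)]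

/-- Divide a relation over `K` by a coefficient of maximal valuation and reduce it. -/
lemma algebraicIndependent_of_residue {b : ι → R}
    (hb : AlgebraicIndependent (IsLocalRing.ResidueField 𝒪) (IsLocalRing.residue R ∘ b)) :
    AlgebraicIndependent K (algebraMap R L ∘ b) := by
  refine algebraicIndependent_iff.mpr fun p hp ↦ by_contra fun hp0 ↦ ?_
  obtain ⟨c, q, m, hq, hm⟩ := exists_map_eq_C_mul_and_coeff_eq_one 𝒪 hp0
  have hqb : aeval b q = 0 := by
    refine FaithfulSMul.algebraMap_injective R L ?_
    rw [← aeval_algebraMap_apply, ← aeval_map_algebraMap K, hq, map_mul]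
    change _ * aeval (algebraMap R L ∘ b) p = _
    rw [hp, mul_zero, map_zero]
  have hqres : aeval (IsLocalRing.residue R ∘ b)
      (MvPolynomial.map (algebraMap 𝒪 (IsLocalRing.ResidueField 𝒪)) q) = 0 := by
    rw [aeval_map_algebraMap, ← IsLocalRing.ResidueField.algebraMap_eq, aeval_algebraMap_apply,
      hqb, map_zero]
  have := congrArg (MvPolynomial.coeff m) (hb.eq_zero_of_aeval_eq_zero _ hqres)
  simp [coeff_map, hm] at this

end ResidueField

section ResidueFieldTrdeg

universe u

variable (𝒪 : Type*) [CommRing 𝒪] [IsDomain 𝒪] [ValuationRing 𝒪]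
  (K : Type*) [Field K] [Algebra 𝒪 K] [IsFractionRing 𝒪 K]
  (L R : Type u) [Field L] [Algebra K L] [Algebra 𝒪 L] [IsScalarTower 𝒪 K L]
  [CommRing R] [IsLocalRing R] [Algebra R L] [FaithfulSMul R L]
  [Algebra 𝒪 R] [IsScalarTower 𝒪 R L] [IsLocalHom (algebraMap 𝒪 R)]

lemma trdeg_residueField_le :
    Algebra.trdeg (IsLocalRing.ResidueField 𝒪) (IsLocalRing.ResidueField R) ≤
      Algebra.trdeg K L := by
  obtain ⟨ι, t, ht⟩ :=
    exists_isTranscendenceBasis' (IsLocalRing.ResidueField 𝒪) (IsLocalRing.ResidueField R)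
  choose b hb using fun i ↦ IsLocalRing.residue_surjective (t i)
  obtain rfl : IsLocalRing.residue R ∘ b = t := funext hb
  rw [← ht.cardinalMk_eq_trdeg]
  exact (algebraicIndependent_of_residue 𝒪 (K := K) (L := L) ht.1).cardinalMk_le_trdeg

end ResidueFieldTrdeg

section ZariskiMain

lemma isAlgebraic_residueField_of_isAlgebraic_quotient {A D : Type*} [CommRing A] [CommRing D]
    [Algebra A D] (q : Ideal A) [q.IsPrime] (p : Ideal D) [p.IsPrime] [p.LiesOver q]
    [Algebra.IsAlgebraic (A ⧸ q) (D ⧸ p)] [Algebra q.ResidueField p.ResidueField]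
    [IsScalarTower A q.ResidueField p.ResidueField] :
    Algebra.IsAlgebraic q.ResidueField p.ResidueField := by
  let := ((algebraMap (D ⧸ p) p.ResidueField).comp (algebraMap (A ⧸ q) (D ⧸ p))).toAlgebra
  have : IsScalarTower (A ⧸ q) (D ⧸ p) p.ResidueField := .of_algebraMap_eq' rfl
  have : IsScalarTower (A ⧸ q) q.ResidueField p.ResidueField := .of_algebraMap_eq fun x ↦ by
    obtain ⟨x, rfl⟩ := Ideal.Quotient.mk_surjective x
    change algebraMap D p.ResidueField (algebraMap A D x) =
      algebraMap q.ResidueField p.ResidueField (algebraMap A q.ResidueField x)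
    rw [← IsScalarTower.algebraMap_apply, ← IsScalarTower.algebraMap_apply]
  have : Algebra.IsAlgebraic (A ⧸ q) p.ResidueField := .trans _ (D ⧸ p) _
  exact .extendScalars (Ideal.injective_algebraMap_quotient_residueField q)

lemma weaklyQuasiFiniteAt_of_map_eq_maximalIdeal {A D : Type*} [CommRing A] [CommRing D]
    [Algebra A D] [Algebra.EssFiniteType A D] (p : Ideal D) [p.IsPrime]
    (hmax : (p.under A).map (algebraMap A (Localization.AtPrime p)) =
      IsLocalRing.maximalIdeal (Localization.AtPrime p))
    [Algebra.IsAlgebraic (A ⧸ p.under A) (D ⧸ p)] :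
    Algebra.WeaklyQuasiFiniteAt A p := by
  rw [Algebra.weaklyQuasiFiniteAt_iff, hmax]
  let q := p.under A
  let := Localization.AtPrime.algebraOfLiesOver q p
  have : Algebra.EssFiniteType A p.ResidueField := .comp A D p.ResidueField
  have : Algebra.EssFiniteType q.ResidueField p.ResidueField := .of_comp A _ _
  have := isAlgebraic_residueField_of_isAlgebraic_quotient q p
  have : Module.Finite q.ResidueField p.ResidueField :=
    Algebra.finite_of_essFiniteType_of_isAlgebraic
  exact .trans A q.ResidueField p.ResidueField

lemma isAlgebraic_of_weaklyQuasiFiniteAt {A D : Type*} [CommRing A] [CommRing D] [Algebra A D]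
    [IsDomain A] [IsDomain D] [Algebra.FiniteType A D]
    (p : Ideal D) [p.IsPrime] [Algebra.WeaklyQuasiFiniteAt A p] : Algebra.IsAlgebraic A D := by
  obtain ⟨r, hrp, hr, H⟩ := Algebra.zariskisMainProperty_iff.mp
    (Algebra.ZariskisMainProperty.of_finiteType_of_weaklyQuasiFiniteAt (R := A) p)
  have hr0 : r ≠ 0 := fun h ↦ hrp (h ▸ p.zero_mem)
  refine ⟨fun x ↦ ?_⟩
  obtain ⟨m, hm⟩ := H x
  exact (hr.pow m).isAlgebraic.of_mul (mem_nonZeroDivisors_of_ne_zero (pow_ne_zero m hr0))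
    hm.isAlgebraic

universe u

variable {k D : Type u} [Field k] [CommRing D] [IsDomain D] [Algebra k D]
  [Algebra.FiniteType k D] (p : Ideal D) [p.IsPrime]

/-- By Zariski's main theorem, `D` is algebraic over the subalgebra generated by lifts of a
transcendence basis of `D ⧸ p` together with an element generating the maximal ideal of `D_p`. -/
lemma trdeg_le_trdeg_quotient_add_one {a : D}
    (ha : IsLocalRing.maximalIdeal (Localization.AtPrime p) =
      Ideal.span {algebraMap D (Localization.AtPrime p) a}) :
    Algebra.trdeg k D ≤ Algebra.trdeg k (D ⧸ p) + 1 := by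
  have : FaithfulSMul k (D ⧸ p) :=
    (faithfulSMul_iff_algebraMap_injective k (D ⧸ p)).mpr (algebraMap k (D ⧸ p)).injective
  obtain ⟨ι, t, ht⟩ := exists_isTranscendenceBasis' k (D ⧸ p)
  choose b hb using fun i ↦ Ideal.Quotient.mk_surjective (t i)
  let A := Algebra.adjoin k (insert a (Set.range b))
  have : Algebra.FiniteType A D := .of_restrictScalars_finiteType k A D
  have halg : Algebra.IsAlgebraic (A ⧸ p.under A) (D ⧸ p) := by
    let φ : A ⧸ p.under A →ₐ[k] D ⧸ p := Ideal.quotientMapₐ p A.val le_rfl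
    have hφ : Set.range t ⊆ φ.range := by
      rintro _ ⟨i, rfl⟩
      exact ⟨Ideal.Quotient.mk _ ⟨b i, Algebra.subset_adjoin (.inr ⟨i, rfl⟩)⟩, hb i⟩
    refine ⟨fun x ↦ ?_⟩
    exact ((ht.isAlgebraic.isAlgebraic x).tower_top_of_subalgebra_le
      (Algebra.adjoin_le hφ)).of_ringHom_of_comp_eq φ.rangeRestrict (RingHom.id (D ⧸ p))
      φ.rangeRestrict_surjective Function.injective_id (by ext; rfl)
  have hmax : (p.under A).map (algebraMap A (Localization.AtPrime p)) =
      IsLocalRing.maximalIdeal (Localization.AtPrime p) := by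
    refine le_antisymm (Ideal.map_le_iff_le_comap.mpr fun x hx ↦ ?_) ?_
    · rw [Ideal.mem_comap, IsScalarTower.algebraMap_apply A D]
      exact (IsLocalization.AtPrime.to_map_mem_maximal_iff _ p _).mpr hx
    · rw [ha, Ideal.span_singleton_le_iff_mem]
      refine Ideal.mem_map_of_mem (algebraMap A (Localization.AtPrime p))
        (x := ⟨a, Algebra.subset_adjoin (Set.mem_insert ..)⟩) ?_
      change a ∈ p
      rw [← IsLocalization.AtPrime.to_map_mem_maximal_iff (Localization.AtPrime p) p, ha]
      exact Ideal.mem_span_singleton_self _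
  have : Algebra.WeaklyQuasiFiniteAt A p := weaklyQuasiFiniteAt_of_map_eq_maximalIdeal p hmax
  have : Algebra.IsAlgebraic A D := isAlgebraic_of_weaklyQuasiFiniteAt p
  calc Algebra.trdeg k D ≤ Cardinal.mk (insert a (Set.range b) : Set D) :=
        Algebra.IsAlgebraic.trdeg_le_cardinalMk k _
    _ ≤ Cardinal.mk (Set.range b) + 1 := Cardinal.mk_insert_le
    _ ≤ Cardinal.mk ι + 1 := by gcongr; exact Cardinal.mk_range_le
    _ = Algebra.trdeg k (D ⧸ p) + 1 := by rw [ht.cardinalMk_eq_trdeg]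

end ZariskiMain

section DiscreteValuationRing

universe u

lemma exists_maximalIdeal_eq_span_algebraMap {D R : Type*} [CommRing D] [CommRing R]
    [IsLocalRing R] [IsPrincipalIdealRing R] [Algebra D R] (M : Submonoid D) [IsLocalization M R] :
    ∃ a : D, IsLocalRing.maximalIdeal R = Ideal.span {algebraMap D R a} := by
  obtain ⟨x, hx⟩ := IsPrincipalIdealRing.principal (IsLocalRing.maximalIdeal R)
  obtain ⟨a, s, rfl⟩ := IsLocalization.exists_mk'_eq M x
  refine ⟨a, hx.trans ?_⟩
  rw [← IsLocalization.mk'_spec R a s]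
  exact (Ideal.span_singleton_mul_right_unit (IsLocalization.map_units R s) _).symm

variable {k : Type u} [Field k] (R : Type u) [CommRing R] [Algebra k R]
  [Algebra.EssFiniteType k R]

lemma trdeg_le_trdeg_residueField_add_one [IsDomain R] [IsLocalRing R] [IsPrincipalIdealRing R] :
    Algebra.trdeg k R ≤ Algebra.trdeg k (IsLocalRing.ResidueField R) + 1 := by
  let D := Algebra.EssFiniteType.subalgebra k R
  let M := Algebra.EssFiniteType.submonoid k R
  let p := (IsLocalRing.maximalIdeal R).under D
  have hM : M = p.primeCompl := by
    ext x
    exact not_not.symm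
  have : IsLocalization M R := Algebra.EssFiniteType.isLocalization k R
  rw [hM] at this
  have : IsPrincipalIdealRing (Localization.AtPrime p) :=
    .of_surjective (IsLocalization.algEquiv p.primeCompl R (Localization.AtPrime p) : R →+* _)
      (IsLocalization.algEquiv p.primeCompl R (Localization.AtPrime p)).surjective
  obtain ⟨a, ha⟩ :=
    exists_maximalIdeal_eq_span_algebraMap (R := Localization.AtPrime p) p.primeCompl
  have : Algebra.IsAlgebraic D R := IsLocalization.isAlgebraic R p.primeCompl
  calc Algebra.trdeg k R = Algebra.trdeg k D := by
        rw [← trdeg_add_eq k D (A := R), trdeg_eq_zero (R := D), add_zero]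
    _ ≤ Algebra.trdeg k (D ⧸ p) + 1 := trdeg_le_trdeg_quotient_add_one p ha
    _ ≤ Algebra.trdeg k (IsLocalRing.ResidueField R) + 1 := by
        gcongr
        exact trdeg_le_of_injective (Ideal.quotientMapₐ (IsLocalRing.maximalIdeal R) D.val le_rfl)
          (Ideal.quotientMap_injective)

end DiscreteValuationRing

section CenterOfDivisorialValuation

universe u

section RestrictedValuation

variable (K R L : Type*) [Field K] [Field L] [Algebra K L] [CommRing R] [IsDomain R]
  [ValuationRing R] [Algebra R L] [IsFractionRing R L]

/-- The valuation subring `K ∩ R` of a subfield `K` of `L`, for a valuation ring `R` with fraction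
field `L`. -/
def restrictedValuationSubring : ValuationSubring K :=
  (ValuationRing.valuation R L).valuationSubring.comap (algebraMap K L)

variable {K R L} in
lemma mem_restrictedValuationSubring_iff {x : K} :
    x ∈ restrictedValuationSubring K R L ↔ ∃ r : R, algebraMap R L r = algebraMap K L x :=
  ValuationRing.mem_integer_iff R L _

instance : Algebra (restrictedValuationSubring K R L) R :=
  ((ValuationRing.equivInteger R L).symm.toRingHom.comp
    ((algebraMap K L).restrict (restrictedValuationSubring K R L)
      (ValuationRing.valuation R L).integer fun _ hx ↦ hx)).toAlgebra

instance : IsScalarTower (restrictedValuationSubring K R L) R L :=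
  .of_algebraMap_eq fun _ ↦ .symm <| congrArg Subtype.val
    ((ValuationRing.equivInteger R L).apply_symm_apply _)

instance : IsLocalHom (algebraMap (restrictedValuationSubring K R L) R) where
  map_nonunit a ha := by
    obtain ⟨b, hb⟩ := ha.exists_right_inv
    have hab : algebraMap K L a * algebraMap R L b = 1 := by
      rw [← map_one (algebraMap R L), ← hb, map_mul, ← IsScalarTower.algebraMap_apply]
      rfl
    have ha0 : (a : K) ≠ 0 := by
      rintro h
      simp [h] at hab
    have hinv : (a : K)⁻¹ ∈ restrictedValuationSubring K R L :=
      mem_restrictedValuationSubring_iff.mpr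
        ⟨b, by rw [map_inv₀]; exact eq_inv_of_mul_eq_one_right hab⟩
    exact .of_mul_eq_one ⟨_, hinv⟩ (Subtype.ext (mul_inv_cancel₀ ha0))

variable (k : Type*) [CommRing k] [Algebra k K] [Algebra k R] [Algebra k L] [IsScalarTower k K L]
  [IsScalarTower k R L]

instance : Algebra k (restrictedValuationSubring K R L) :=
  ((algebraMap k K).codRestrict (restrictedValuationSubring K R L) fun c ↦
    mem_restrictedValuationSubring_iff.mpr ⟨algebraMap k R c, by
      rw [← IsScalarTower.algebraMap_apply, ← IsScalarTower.algebraMap_apply]⟩).toAlgebra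

instance : IsScalarTower k (restrictedValuationSubring K R L) R :=
  .of_algebraMap_eq fun c ↦ IsFractionRing.injective R L <| by
    rw [← IsScalarTower.algebraMap_apply, ← IsScalarTower.algebraMap_apply,
      IsScalarTower.algebraMap_apply k K L]
    rfl

end RestrictedValuation

/-- Subtract `trdeg_residueField_le` from `trdeg_le_trdeg_residueField_add_one`. -/
lemma trdeg_le_trdeg_restricted_residueField_add_one (k 𝒪 K R L : Type u) [Field k] [Field K]
    [Field L] [Algebra k K] [Algebra K L] [Algebra k L] [IsScalarTower k K L]
    [CommRing R] [IsDomain R] [IsDiscreteValuationRing R] [Algebra k R]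
    [Algebra.EssFiniteType k R] [Algebra R L] [IsFractionRing R L] [IsScalarTower k R L]
    [CommRing 𝒪] [IsDomain 𝒪] [ValuationRing 𝒪] [Algebra 𝒪 K] [IsFractionRing 𝒪 K] [Algebra 𝒪 L]
    [IsScalarTower 𝒪 K L] [Algebra 𝒪 R] [IsScalarTower 𝒪 R L] [IsLocalHom (algebraMap 𝒪 R)]
    [Algebra k 𝒪] [IsScalarTower k 𝒪 R] :
    Algebra.trdeg k K ≤ Algebra.trdeg k (IsLocalRing.ResidueField 𝒪) + 1 := by
  have : Algebra.EssFiniteType R L := .of_isLocalization L (nonZeroDivisors R)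
  have : Algebra.EssFiniteType k L := .comp k R L
  have : Algebra.EssFiniteType K L := .of_comp k K L
  have : Algebra.IsAlgebraic R L := IsLocalization.isAlgebraic L (nonZeroDivisors R)
  have : FaithfulSMul k R := (faithfulSMul_iff_algebraMap_injective k R).mpr
    (algebraMap k R).injective
  have : IsScalarTower k (IsLocalRing.ResidueField 𝒪) (IsLocalRing.ResidueField R) :=
    .to₁₃₄ k 𝒪 _ _
  rw [← Cardinal.add_le_add_iff_of_lt_aleph0 (trdeg_lt_aleph0 K L)]
  calc Algebra.trdeg k K + Algebra.trdeg K L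
      = Algebra.trdeg k R := by
        rw [trdeg_add_eq k K, ← trdeg_add_eq k R (A := L), trdeg_eq_zero (R := R),
          add_zero]
    _ ≤ Algebra.trdeg k (IsLocalRing.ResidueField R) + 1 := trdeg_le_trdeg_residueField_add_one R
    _ = Algebra.trdeg k (IsLocalRing.ResidueField 𝒪) +
          Algebra.trdeg (IsLocalRing.ResidueField 𝒪) (IsLocalRing.ResidueField R) + 1 := by
        rw [trdeg_add_eq k (IsLocalRing.ResidueField 𝒪)]
    _ ≤ Algebra.trdeg k (IsLocalRing.ResidueField 𝒪) + 1 + Algebra.trdeg K L := by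
        rw [add_right_comm]
        gcongr
        exact trdeg_residueField_le 𝒪 K L R

lemma height_comap_maximalIdeal_le_of_algebraicIndependent {k B R : Type u} [Field k]
    [CommRing B] [Algebra k B] [CommRing R] [IsLocalRing R] [Algebra k R] (j : B →ₐ[k] R)
    {ι : Type u} {b : ι → B} (hb : AlgebraicIndependent k (IsLocalRing.residue R ∘ j ∘ b))
    (hB : Algebra.trdeg k B < Cardinal.aleph0) (n : ℕ)
    (hn : Algebra.trdeg k B ≤ Cardinal.mk ι + n) :
    ((IsLocalRing.maximalIdeal R).comap j).height ≤ n := by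
  let P := (IsLocalRing.maximalIdeal R).comap j
  let φ : B ⧸ P →ₐ[k] IsLocalRing.ResidueField R :=
    Ideal.quotientMapₐ (IsLocalRing.maximalIdeal R) j le_rfl
  have hb' : AlgebraicIndependent k (Ideal.Quotient.mk P ∘ b) := .of_comp φ hb
  refine height_le_of_trdeg_le_trdeg_quotient_add (k := k) hB n P (hn.trans ?_)
  gcongr
  exact hb'.cardinalMk_le_trdeg

section EssFiniteType

variable (k K R L : Type u) [Field k] [Field K] [Field L] [Algebra k K] [Algebra K L] [Algebra k L]
  [IsScalarTower k K L] [CommRing R] [IsDomain R] [IsDiscreteValuationRing R] [Algebra k R]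
  [Algebra.EssFiniteType k R] [Algebra R L] [IsFractionRing R L] [IsScalarTower k R L]

lemma exists_finite_algebraicIndependent_residue :
    ∃ (ι : Type u) (_ : Finite ι) (a : ι → restrictedValuationSubring K R L),
      AlgebraicIndependent k (fun i ↦ IsLocalRing.residue R (algebraMap _ R (a i))) ∧
        Algebra.trdeg k K ≤ Cardinal.mk ι + 1 := by
  let 𝒪 := restrictedValuationSubring K R L
  let κ := IsLocalRing.ResidueField 𝒪
  have : IsScalarTower k κ (IsLocalRing.ResidueField R) := .to₁₃₄ k 𝒪 _ _
  let χ : κ →ₐ[k] IsLocalRing.ResidueField R := IsScalarTower.toAlgHom k κ _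
  have : Algebra.EssFiniteType k (IsLocalRing.ResidueField R) :=
    inferInstanceAs (Algebra.EssFiniteType k (R ⧸ IsLocalRing.maximalIdeal R))
  have : FinTrdeg k κ := finTrdeg_iff_trdeg.mpr <|
    (trdeg_le_of_injective χ χ.injective).trans_lt (trdeg_lt_aleph0 k _)
  obtain ⟨t, ht⟩ := exists_finset_isTranscendenceBasis k κ
  choose a ha using IsLocalRing.residue_surjective (R := 𝒪)
  refine ⟨t, inferInstance, fun x ↦ a x, ?_, ?_⟩
  · convert ht.1.map' χ.injective using 2 with x
    exact congrArg χ (ha x)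
  · rw [ht.cardinalMk_eq_trdeg]
    exact trdeg_le_trdeg_restricted_residueField_add_one k 𝒪 K R L

/-- The finitely many elements are lifts of a transcendence basis of the residue field of
`K ∩ R`. -/
lemma exists_finite_height_comap_maximalIdeal_le_one :
    ∃ s : Set K, s.Finite ∧ s ⊆ restrictedValuationSubring K R L ∧
      ∀ (B : Subalgebra k K) (j : B →ₐ[k] R), (∀ b, algebraMap R L (j b) = algebraMap K L b) →
        s ⊆ B → ((IsLocalRing.maximalIdeal R).comap j).height ≤ 1 := by
  obtain ⟨ι, _, a, ha, hK⟩ := exists_finite_algebraicIndependent_residue k K R L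
  refine ⟨Set.range fun i ↦ (a i : K), Set.finite_range _,
    Set.range_subset_iff.mpr fun i ↦ (a i).2, fun B j hj hs ↦ ?_⟩
  let b (i : ι) : B := ⟨a i, hs ⟨i, rfl⟩⟩
  have hb : IsLocalRing.residue R ∘ j ∘ b =
      fun i ↦ IsLocalRing.residue R (algebraMap _ R (a i)) := funext fun i ↦ by
    refine congrArg (IsLocalRing.residue R) (IsFractionRing.injective R L ?_)
    rw [← IsScalarTower.algebraMap_apply]
    exact hj (b i)
  have hBK : Algebra.trdeg k B ≤ Algebra.trdeg k K :=
    trdeg_le_of_injective B.val Subtype.val_injective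
  have hB : Algebra.trdeg k B < Cardinal.aleph0 :=
    have : Algebra.EssFiniteType R L := .of_isLocalization L (nonZeroDivisors R)
    have : Algebra.EssFiniteType k L := .comp k R L
    (trdeg_le_of_injective ((IsScalarTower.toAlgHom k K L).comp B.val)
      ((algebraMap K L).injective.comp Subtype.val_injective)).trans_lt (trdeg_lt_aleph0 k L)
  exact mod_cast height_comap_maximalIdeal_le_of_algebraicIndependent j (hb ▸ ha) hB 1
    (mod_cast hBK.trans hK)

end EssFiniteType

end CenterOfDivisorialValuation

/-! ### Normal projective coordinates -/

section Rees

open Polynomial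

section CommRing

variable {k K : Type*} [CommRing k] [CommRing K] [Algebra k K] {W : Set K}

variable (k) in
/-- The subalgebra `k[x t : x ∈ W]` of `K[t]`. For a domain `K` it is the homogeneous coordinate
ring of the closure of the point `(x)_{x ∈ W}` of projective space. -/
def homogCoordRing (W : Set K) : Subalgebra k K[X] :=
  Algebra.adjoin k (monomial 1 '' W)

variable (k) in
/-- The degree `n` piece of the integral closure of `homogCoordRing k W` in `K[t]`, as a submodule
of `K` by dropping the factor `t ^ n`. -/
def integralPiece (W : Set K) (n : ℕ) : Submodule k K :=
  (((integralClosure (homogCoordRing k W) K[X]).restrictScalars k).toSubmodule).comap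
    ((monomial n).restrictScalars k)

lemma mem_integralPiece {n : ℕ} {w : K} :
    w ∈ integralPiece k W n ↔ _root_.IsIntegral (homogCoordRing k W) (monomial n w) := Iff.rfl

lemma integralPiece_mul_le (m n : ℕ) :
    integralPiece k W m * integralPiece k W n ≤ integralPiece k W (m + n) := by
  rw [Submodule.mul_le]
  intro a ha b hb
  rw [mem_integralPiece] at *
  rw [← monomial_mul_monomial]
  exact ha.mul hb

lemma one_le_integralPiece_zero : (1 : Submodule k K) ≤ integralPiece k W 0 := by
  rw [Submodule.one_le, mem_integralPiece]
  exact isIntegral_one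

lemma integralPiece_pow_le (d n : ℕ) : integralPiece k W d ^ n ≤ integralPiece k W (d * n) := by
  induction n with
  | zero => simpa using one_le_integralPiece_zero
  | succ n ih =>
    rw [pow_succ]
    exact (mul_le_mul' ih le_rfl).trans (integralPiece_mul_le _ _)

lemma span_le_integralPiece_one : Submodule.span k W ≤ integralPiece k W 1 :=
  Submodule.span_le.mpr fun x hx ↦ mem_integralPiece.mpr <|
    isIntegral_algebraMap (x := (⟨_, Algebra.subset_adjoin ⟨x, hx, rfl⟩⟩ : homogCoordRing k W))

lemma span_pow_le_integralPiece (n : ℕ) : Submodule.span k W ^ n ≤ integralPiece k W n := by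
  simpa using (pow_le_pow_left' span_le_integralPiece_one n).trans (integralPiece_pow_le 1 n)

lemma coeff_mem_of_mem_homogCoordRing {f : K[X]} (hf : f ∈ homogCoordRing k W) (n : ℕ) :
    f.coeff n ∈ Submodule.span k W ^ n := by
  induction hf using Algebra.adjoin_induction generalizing n with
  | mem x hx =>
    obtain ⟨x, hx, rfl⟩ := hx
    rw [Polynomial.coeff_monomial]
    split_ifs with h
    · rw [← h, pow_one]
      exact Submodule.subset_span hx
    · exact zero_mem _
  | algebraMap r =>
    rw [Polynomial.algebraMap_apply, Polynomial.coeff_C]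
    split_ifs with h
    · rw [h, pow_zero]
      exact Submodule.algebraMap_mem r
    · exact zero_mem _
  | add x y _ _ hx hy => exact Polynomial.coeff_add x y n ▸ add_mem (hx n) (hy n)
  | mul x y _ _ hx hy =>
    rw [Polynomial.coeff_mul]
    refine sum_mem fun p hp ↦ ?_
    rw [← Finset.HasAntidiagonal.mem_antidiagonal.mp hp, pow_add]
    exact Submodule.mul_mem_mul (hx _) (hy _)

lemma mem_iSup_of_monomial_mem_span {G : Finset (ℕ × K)} {n : ℕ} (hn : ∀ g ∈ G, g.1 ≤ n) {w : K}
    (hw : monomial n w ∈ Submodule.span (homogCoordRing k W)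
      ((fun g : ℕ × K ↦ monomial g.1 g.2) '' G)) :
    w ∈ ⨆ g ∈ G, Submodule.span k W ^ (n - g.1) * Submodule.span k {g.2} := by
  obtain ⟨τ, hτ⟩ := (Submodule.mem_span_image_finset_iff_exists_fun _).mp hw
  have hw' : ∑ g : G, (τ g : K[X]).coeff (n - g.1.1) * g.1.2 = w := by
    rw [← coeff_monomial_same n w, ← hτ, finsetSum_coeff]
    refine Finset.sum_congr rfl fun g _ ↦ ?_
    conv_rhs => rw [← Nat.sub_add_cancel (hn g g.2)]
    exact (Polynomial.coeff_mul_monomial _ _ _ _).symm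
  rw [← hw']
  exact sum_mem fun g _ ↦ Submodule.mem_iSup_of_mem g.1 <| Submodule.mem_iSup_of_mem g.2 <|
    Submodule.mul_mem_mul (coeff_mem_of_mem_homogCoordRing (τ g).2 _)
      (Submodule.mem_span_singleton_self _)

end CommRing

lemma isFractionRing_of_adjoin_range_eq_top {k T L : Type*} [Field k] [CommRing T] [Field L]
    [Algebra k T] [Algebra T L] [Algebra k L] [IsScalarTower k T L] [FaithfulSMul T L]
    (h : IntermediateField.adjoin k (Set.range (algebraMap T L)) = ⊤) : IsFractionRing T L := by
  refine IsFractionRing.of_field T L fun x ↦ ?_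
  have hrange : Algebra.adjoin k (Set.range (algebraMap T L)) =
      (IsScalarTower.toAlgHom k T L).range :=
    Algebra.adjoin_eq (IsScalarTower.toAlgHom k T L).range
  obtain ⟨r, hr, s, hs, hx⟩ := IntermediateField.mem_adjoin_iff_div.mp
    (h ▸ IntermediateField.mem_top : x ∈ IntermediateField.adjoin k _)
  rw [hrange] at hr hs
  obtain ⟨r, rfl⟩ := hr
  obtain ⟨s, rfl⟩ := hs
  exact ⟨r, s, hx⟩

/-- Noether normalization reduces finiteness of normalization to the separable extension of fraction
fields of a polynomial ring. -/
lemma isNoetherian_integralClosure_of_finiteType (k T L : Type*) [Field k] [CharZero k]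
    [CommRing T] [IsDomain T] [Algebra k T] [Algebra.FiniteType k T] [Field L] [Algebra T L]
    [IsFractionRing T L] : IsNoetherian T (integralClosure T L) := by
  obtain ⟨n, g, hginj, hgfin⟩ := exists_finite_inj_algHom_of_fg k T
  let A := MvPolynomial (Fin n) k
  let : Algebra A T := g.toRingHom.toAlgebra
  have : Module.Finite A T := hgfin
  let : Algebra A L := ((algebraMap T L).comp g.toRingHom).toAlgebra
  have : IsScalarTower A T L := .of_algebraMap_eq' rfl
  have : FaithfulSMul A L := (faithfulSMul_iff_algebraMap_injective A L).mpr
    ((IsFractionRing.injective T L).comp hginj)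
  let F := FractionRing A
  let : Algebra F L := FractionRing.liftAlgebra A L
  have : IsScalarTower A F L := FractionRing.isScalarTower_liftAlgebra A L
  have : Algebra.QuasiFinite A L := .trans A T L
  have : Algebra.QuasiFinite F L := .of_restrictScalars A F L
  have : Module.Finite F L := .of_quasiFinite
  have : CharZero F := charZero_of_injective_algebraMap (algebraMap k F).injective
  have : IsIntegralClosure (integralClosure T L) A L :=
    { algebraMap_injective := Subtype.val_injective
      isIntegral_iff := fun {x} ↦
        ⟨fun hx ↦ ⟨⟨x, hx.tower_top⟩, rfl⟩, by rintro ⟨y, rfl⟩; exact isIntegral_trans _ y.2⟩ }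
  have := IsIntegralClosure.isNoetherian A F L (integralClosure T L)
  exact isNoetherian_of_tower A this

lemma isIntegral_of_monic_of_coeff_mem_range {R A : Type*} [CommRing R] [CommRing A] [Algebra R A]
    {p : A[X]} (hp : p.Monic) (hcoeff : ∀ j < p.natDegree, p.coeff j ∈ Set.range (algebraMap R A))
    {x : A} (hx : p.eval x = 0) : _root_.IsIntegral R x := by
  have hlifts : p ∈ Polynomial.lifts (algebraMap R A) := by
    refine (Polynomial.lifts_iff_coeff_lifts p).mpr fun j ↦ ?_
    rcases lt_trichotomy j p.natDegree with hj | rfl | hj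
    · exact hcoeff j hj
    · exact ⟨1, by rw [map_one, hp.coeff_natDegree]⟩
    · exact ⟨0, by rw [map_zero, coeff_eq_zero_of_natDegree_lt hj]⟩
  obtain ⟨q, hq, -, hmonic⟩ := Polynomial.lifts_and_natDegree_eq_and_monic hlifts hp
  exact ⟨q, hmonic, by rw [← Polynomial.eval_map, hq, hx]⟩

section Field

variable {k K : Type*} [Field k] [Field K] [Algebra k K] {W : Set K}

lemma isFractionRing_homogCoordRing (h1 : 1 ∈ W) (hW : IntermediateField.adjoin k W = ⊤) :
    IsFractionRing (homogCoordRing k W) (FractionRing K[X]) := by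
  let L := FractionRing K[X]
  have : FaithfulSMul (homogCoordRing k W) L := (faithfulSMul_iff_algebraMap_injective _ _).mpr
    ((IsFractionRing.injective K[X] L).comp Subtype.val_injective)
  refine isFractionRing_of_adjoin_range_eq_top (k := k) ?_
  set E := IntermediateField.adjoin k (Set.range (algebraMap (homogCoordRing k W) L))
  have mem_E {x : K} (hx : x ∈ W) : algebraMap K[X] L (monomial 1 x) ∈ E :=
    IntermediateField.subset_adjoin _ _ ⟨⟨_, Algebra.subset_adjoin ⟨x, hx, rfl⟩⟩, rfl⟩
  have X_mem_E : algebraMap K[X] L X ∈ E := by simpa [monomial_one_one_eq_X] using mem_E h1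
  have algebraMap_mem_E (x : K) : algebraMap K L x ∈ E := by
    have hle : IntermediateField.adjoin k W ≤ E.comap (IsScalarTower.toAlgHom k K L) := by
      refine IntermediateField.adjoin_le_iff.mpr fun x hx ↦ ?_
      have := div_mem (mem_E hx) X_mem_E
      rwa [← Polynomial.C_mul_X_eq_monomial, map_mul, mul_div_cancel_right₀] at this
      exact (map_ne_zero_iff _ (IsFractionRing.injective K[X] L)).mpr X_ne_zero
    exact hle (hW ▸ IntermediateField.mem_top)
  have polynomial_mem_E (f : K[X]) : algebraMap K[X] L f ∈ E := by
    induction f using Polynomial.induction_on' with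
    | add p q hp hq => exact map_add (algebraMap K[X] L) p q ▸ add_mem hp hq
    | monomial n a =>
      rw [← Polynomial.C_mul_X_pow_eq_monomial, map_mul, map_pow]
      exact mul_mem (algebraMap_mem_E a) (pow_mem X_mem_E n)
  refine eq_top_iff.mpr fun x _ ↦ ?_
  obtain ⟨f, g, -, rfl⟩ := IsFractionRing.div_surjective (A := K[X]) x
  exact div_mem (polynomial_mem_E f) (polynomial_mem_E g)

lemma isNoetherian_integralClosure_homogCoordRing [CharZero k] (hfin : W.Finite) (h1 : 1 ∈ W)
    (hW : IntermediateField.adjoin k W = ⊤) :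
    IsNoetherian (homogCoordRing k W) (integralClosure (homogCoordRing k W) K[X]) := by
  set T := homogCoordRing k W
  let L := FractionRing K[X]
  have : Algebra.FiniteType k T := .adjoin_of_finite (hfin.image _)
  have : IsFractionRing T L := isFractionRing_homogCoordRing h1 hW
  have : IsNoetherian T (integralClosure T L) := isNoetherian_integralClosure_of_finiteType k T L
  let f := (IsScalarTower.toAlgHom T K[X] L).mapIntegralClosure
  exact isNoetherian_of_injective f.toLinearMap fun x y hxy ↦
    Subtype.ext (IsFractionRing.injective K[X] L (congrArg Subtype.val hxy))

/-- The integral closure of `homogCoordRing k W` in `K[t]` is a noetherian module, so finitely many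
homogeneous elements `w t ^ n` generate all of them. -/
lemma exists_finset_span_monomial_eq [CharZero k] (hfin : W.Finite) (h1 : 1 ∈ W)
    (hW : IntermediateField.adjoin k W = ⊤) :
    ∃ G : Finset (ℕ × K), (∀ g ∈ G, g.2 ∈ integralPiece k W g.1) ∧
      ∀ n, ∀ w ∈ integralPiece k W n, monomial n w ∈ Submodule.span (homogCoordRing k W)
        ((fun g : ℕ × K ↦ monomial g.1 g.2) '' G) := by
  classical
  set T := homogCoordRing k W
  let H : Set (ℕ × K) := {g | g.2 ∈ integralPiece k W g.1}
  let f : ℕ × K → K[X] := fun g ↦ monomial g.1 g.2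
  have hle : Submodule.span T (f '' H) ≤ (integralClosure T K[X]).toSubmodule :=
    Submodule.span_le.mpr (Set.image_subset_iff.mpr fun _ hg ↦ hg)
  have := isNoetherian_integralClosure_homogCoordRing hfin h1 hW
  have : IsNoetherian T (Submodule.span T (f '' H)) :=
    isNoetherian_of_injective (Submodule.inclusion hle) (Submodule.inclusion_injective hle)
  have hfg : (Submodule.span T (f '' H)).FG := Module.Finite.iff_fg.mp inferInstance
  obtain ⟨G', hG'H, hG'⟩ := (Submodule.fg_span_iff_fg_span_finset_subset _).mp hfg
  obtain ⟨G, hG, rfl⟩ := Finset.subset_set_image_iff.mp hG'H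
  refine ⟨G, fun g hg ↦ hG hg, fun n w hw ↦ ?_⟩
  have : monomial n w ∈ Submodule.span T (f '' H) := Submodule.subset_span ⟨(n, w), hw, rfl⟩
  rwa [hG', Finset.coe_image] at this

lemma exists_integralPiece_le [CharZero k] (hfin : W.Finite) (h1 : 1 ∈ W)
    (hW : IntermediateField.adjoin k W = ⊤) :
    ∃ d, 1 ≤ d ∧ (integralPiece k W d).FG ∧ ∀ n, d ≤ n →
      integralPiece k W n ≤ Submodule.span k W ^ (n - d) * integralPiece k W d := by
  obtain ⟨G, hG, hspan⟩ := exists_finset_span_monomial_eq hfin h1 hW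
  let d := G.sup Prod.fst + 1
  have hd : ∀ g ∈ G, g.1 ≤ d := fun g hg ↦ (Finset.le_sup hg).trans (Nat.le_succ _)
  have hle : ∀ n, d ≤ n → integralPiece k W n ≤
      ⨆ g ∈ G, Submodule.span k W ^ (n - g.1) * Submodule.span k {g.2} := fun n hn w hw ↦
    mem_iSup_of_monomial_mem_span (fun g hg ↦ (hd g hg).trans hn) (hspan n w hw)
  refine ⟨d, Nat.le_add_left _ _, ?_, fun n hn ↦ (hle n hn).trans (iSup₂_le fun g hg ↦ ?_)⟩
  · have hfg : (⨆ g ∈ G, Submodule.span k W ^ (d - g.1) * Submodule.span k {g.2}).FG :=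
      Submodule.fg_biSup _ _ fun g _ ↦
        ((Submodule.fg_span hfin).pow _).mul (Submodule.fg_span_singleton _)
    exact hfg.of_le (hle d le_rfl)
  · calc Submodule.span k W ^ (n - g.1) * Submodule.span k {g.2}
        = Submodule.span k W ^ (n - d) *
            (Submodule.span k W ^ (d - g.1) * Submodule.span k {g.2}) := by
          rw [← mul_assoc, ← pow_add, tsub_add_tsub_cancel hn (hd g hg)]
      _ ≤ Submodule.span k W ^ (n - d) *
            (integralPiece k W (d - g.1) * integralPiece k W g.1) :=
          mul_le_mul' le_rfl (mul_le_mul' (span_pow_le_integralPiece _)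
            ((Submodule.span_singleton_le_iff_mem _ _).mpr (hG g hg)))
      _ ≤ Submodule.span k W ^ (n - d) * integralPiece k W d := by
          refine mul_le_mul' le_rfl ((integralPiece_mul_le _ _).trans_eq ?_)
          rw [Nat.sub_add_cancel (hd g hg)]

section Charts

variable {ι : Type*} {d : ℕ} {z : ι → K}

variable (k) in
/-- The coordinate ring `k[z j / z i : j]` of the affine chart `z i ≠ 0` of the closure of the point
`(z j)_j` of projective space. -/
def coordChart (z : ι → K) (i : ι) : Subalgebra k K :=
  Algebra.adjoin k (Set.range fun j ↦ z j / z i)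

lemma integralPiece_mul_le_pow {n : ℕ} (hn : 1 ≤ n) (hle : ∀ n, d ≤ n →
      integralPiece k W n ≤ Submodule.span k W ^ (n - d) * integralPiece k W d) :
    integralPiece k W (d * n) ≤ integralPiece k W d ^ n := by
  obtain ⟨n, rfl⟩ := Nat.exists_eq_add_of_le' hn
  refine (hle _ (Nat.le_mul_of_pos_right d (by lia : 0 < n + 1))).trans ?_
  rw [mul_add_one, Nat.add_sub_cancel, pow_mul, pow_succ]
  exact mul_le_mul' (pow_le_pow_left' (span_pow_le_integralPiece d) n) le_rfl

lemma div_pow_mem_coordChart (i : ι) (m : ℕ) {u : K}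
    (hu : u ∈ Submodule.span k (Set.range z) ^ m) : u / z i ^ m ∈ coordChart k z i := by
  have hle : Submodule.span k (Set.range z) ≤
      (coordChart k z i).toSubmodule.comap (LinearMap.mulRight k (z i)⁻¹) :=
    Submodule.span_le.mpr (Set.range_subset_iff.mpr fun j ↦ by
      exact Algebra.subset_adjoin ⟨j, div_eq_mul_inv _ _⟩)
  induction m generalizing u with
  | zero =>
    obtain ⟨r, rfl⟩ := Submodule.mem_one.mp (pow_zero (Submodule.span k (Set.range z)) ▸ hu)
    simp
  | succ m ih =>
    rw [pow_succ] at hu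
    induction hu using Submodule.mul_induction_on' with
    | mem_mul_mem a ha b hb =>
      rw [pow_succ, mul_div_mul_comm]
      exact mul_mem (ih ha) (div_eq_mul_inv b (z i) ▸ hle hb)
    | add x _ y _ hx hy => exact add_div x y _ ▸ add_mem hx hy

lemma mul_pow_mem_integralPiece {m n : ℕ} {b x : K} (hx : x ∈ integralPiece k W d) (hmn : m ≤ n)
    (hb : b * x ^ m ∈ integralPiece k W (d * m)) : b * x ^ n ∈ integralPiece k W (d * n) := by
  obtain ⟨l, rfl⟩ := Nat.exists_eq_add_of_le hmn
  rw [pow_add, mul_add, ← mul_assoc]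
  exact integralPiece_mul_le _ _
    (Submodule.mul_mem_mul hb (integralPiece_pow_le d l (Submodule.pow_mem_pow _ hx l)))

lemma exists_mul_pow_mem_of_mem_coordChart (hz : ∀ j, z j ∈ integralPiece k W d) {i : ι}
    (hi : z i ≠ 0) {b : K} (hb : b ∈ coordChart k z i) :
    ∃ m, b * z i ^ m ∈ integralPiece k W (d * m) := by
  induction hb using Algebra.adjoin_induction with
  | mem x hx =>
    obtain ⟨j, rfl⟩ := hx
    exact ⟨1, by simpa [div_mul_cancel₀ _ hi] using hz j⟩
  | algebraMap r =>
    exact ⟨0, by simpa using one_le_integralPiece_zero (Submodule.algebraMap_mem r)⟩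
  | add x y _ _ hx hy =>
    obtain ⟨m, hm⟩ := hx
    obtain ⟨n, hn⟩ := hy
    refine ⟨m + n, ?_⟩
    rw [add_mul]
    exact add_mem (mul_pow_mem_integralPiece (hz i) (Nat.le_add_right m n) hm)
      (mul_pow_mem_integralPiece (hz i) (Nat.le_add_left n m) hn)
  | mul x y _ _ hx hy =>
    obtain ⟨m, hm⟩ := hx
    obtain ⟨n, hn⟩ := hy
    refine ⟨m + n, ?_⟩
    rw [pow_add, mul_mul_mul_comm, mul_add]
    exact integralPiece_mul_le _ _ (Submodule.mul_mem_mul hm hn)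

/-- A monic equation for `w` over the chart turns, on scaling its roots by `z i ^ m`, into an
equation for `w * z i ^ m` with coefficients in the integrally closed graded algebra. -/
lemma exists_mul_pow_mem_of_isIntegral (hz : ∀ j, z j ∈ integralPiece k W d) {i : ι} (hi : z i ≠ 0)
    {w : K} (hw : _root_.IsIntegral (coordChart k z i) w) :
    ∃ m, 1 ≤ m ∧ w * z i ^ m ∈ integralPiece k W (d * m) := by
  obtain ⟨p, hp, hpw⟩ := hw
  choose μ hμ using fun j ↦ exists_mul_pow_mem_of_mem_coordChart hz hi (p.coeff j).2
  let m := (Finset.range p.natDegree).sup μ + 1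
  refine ⟨m, Nat.le_add_left _ _, ?_⟩
  let J := integralClosure (homogCoordRing k W) K[X]
  let pK : K[X][X] := p.map (Polynomial.C.comp (coordChart k z i).val.toRingHom)
  let q : K[X][X] := pK.scaleRoots (monomial (d * m) (z i ^ m))
  have hpK : pK.natDegree = p.natDegree := hp.natDegree_map _
  have hq : q.natDegree = p.natDegree := (natDegree_scaleRoots _ _).trans hpK
  have hcoeff (j : ℕ) (hj : j < q.natDegree) : q.coeff j ∈ Set.range (algebraMap J K[X]) := by
    rw [hq] at hj
    rw [coeff_scaleRoots, hpK, Polynomial.monomial_pow, ← pow_mul, mul_assoc]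
    have hμm : μ j ≤ m * (p.natDegree - j) :=
      ((Finset.le_sup (Finset.mem_range.mpr hj)).trans (Nat.le_succ _)).trans
        (Nat.le_mul_of_pos_right m (Nat.sub_pos_of_lt hj))
    have hmem := mul_pow_mem_integralPiece (hz i) hμm (hμ j)
    exact ⟨⟨_, hmem⟩, by simp [pK, Polynomial.C_mul_monomial]⟩
  have hroot : q.eval (monomial (d * m) (w * z i ^ m)) = 0 := by
    have hpK0 : pK.eval₂ (RingHom.id _) (Polynomial.C w) = 0 := by
      rw [← map_zero Polynomial.C, ← hpw, Polynomial.hom_eval₂, Polynomial.eval₂_map]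
      rfl
    have := scaleRoots_eval₂_eq_zero (RingHom.id _) hpK0 (s := monomial (d * m) (z i ^ m))
    rwa [RingHom.id_apply, mul_comm, Polynomial.C_mul_monomial] at this
  exact isIntegral_trans (A := J) _
    (isIntegral_of_monic_of_coeff_mem_range ((monic_scaleRoots_iff _).mpr (hp.map _)) hcoeff hroot)

/-- Setting `t = 1` turns integrality over `k[x t : x ∈ W]` into integrality over `k[W]`. -/
lemma isIntegral_of_mem_integralPiece {w : K} (hw : w ∈ integralPiece k W d) :
    _root_.IsIntegral (Algebra.adjoin k W) w := by
  let ev : K[X] →ₐ[k] K := (Polynomial.aeval (1 : K)).restrictScalars k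
  have hle : homogCoordRing k W ≤ (Algebra.adjoin k W).comap ev :=
    Algebra.adjoin_le (Set.image_subset_iff.mpr fun x hx ↦ by
      simpa [ev] using Algebra.subset_adjoin hx)
  let φ : homogCoordRing k W →ₐ[k] Algebra.adjoin k W :=
    (ev.comp (homogCoordRing k W).val).codRestrict _ fun t ↦ hle t.2
  simpa [ev] using _root_.IsIntegral.map_of_comp_eq φ.toRingHom ev.toRingHom rfl hw

lemma isIntegrallyClosedIn_coordChart (hle : ∀ n, d ≤ n →
      integralPiece k W n ≤ Submodule.span k W ^ (n - d) * integralPiece k W d)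
    (hz : Submodule.span k (Set.range z) = integralPiece k W d) {i : ι} (hi : z i ≠ 0) :
    IsIntegrallyClosedIn (coordChart k z i) K := by
  refine isIntegrallyClosedIn_iff.mpr ⟨Subtype.val_injective, fun {w} hw ↦ ?_⟩
  have hz' (j : ι) : z j ∈ integralPiece k W d := hz ▸ Submodule.subset_span ⟨j, rfl⟩
  obtain ⟨m, hm, hmem⟩ := exists_mul_pow_mem_of_isIntegral hz' hi hw
  have := div_pow_mem_coordChart i m (hz.symm ▸ integralPiece_mul_le_pow hm hle hmem)
  rw [mul_div_cancel_right₀ _ (pow_ne_zero _ hi)] at this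
  exact ⟨⟨w, this⟩, rfl⟩

end Charts

lemma exists_fin_span_range_eq {R M : Type*} [Semiring R] [AddCommMonoid M] [Module R M]
    {V : Submodule R M} (hV : V.FG) {x : M} (hx : x ∈ V) (hx0 : x ≠ 0) :
    ∃ (N : ℕ) (z : Fin (N + 1) → M),
      z 0 = x ∧ (∀ i, z i ≠ 0) ∧ Submodule.span R (Set.range z) = V := by
  classical
  obtain ⟨t, rfl⟩ := hV
  let e := (t.erase 0).equivFin.symm
  refine ⟨_, Fin.cons x fun i ↦ (e i : M), rfl, Fin.cases hx0 fun i ↦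
    Finset.ne_of_mem_erase (e i).2, ?_⟩
  have hrange : Set.range (fun i ↦ (e i : M)) = (t : Set M) \ {0} := by
    rw [← Finset.coe_erase, ← Subtype.range_coe (s := ((t.erase 0 : Finset M) : Set M))]
    exact e.surjective.range_comp _
  rw [Fin.range_cons, hrange, Submodule.span_insert, Submodule.span_sdiff_singleton_zero,
    sup_eq_right, Submodule.span_singleton_le_iff_mem]
  exact hx

/-- The coordinates embed the normalization of the closure of the point `(x)_{x ∈ W}` of projective
space: they span a high degree piece of the integral closure of `homogCoordRing k W`. -/
theorem exists_normal_projective_coordinates [CharZero k] (hfin : W.Finite) (h1 : 1 ∈ W)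
    (hW : IntermediateField.adjoin k W = ⊤) :
    ∃ (N : ℕ) (z : Fin (N + 1) → K), z 0 = 1 ∧ (∀ i, z i ≠ 0) ∧
      (∀ i, IsIntegrallyClosedIn (coordChart k z i) K) ∧ W ⊆ Submodule.span k (Set.range z) ∧
      ∀ j, _root_.IsIntegral (Algebra.adjoin k W) (z j) := by
  obtain ⟨d, hd, hfg, hle⟩ := exists_integralPiece_le hfin h1 hW
  have one_mem : 1 ∈ Submodule.span k W := Submodule.subset_span h1
  have hWd : Submodule.span k W ≤ integralPiece k W d := calc
    Submodule.span k W = Submodule.span k W ^ 1 := (pow_one _).symm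
    _ ≤ Submodule.span k W ^ d := pow_le_pow_right' (Submodule.one_le.mpr one_mem) hd
    _ ≤ integralPiece k W d := span_pow_le_integralPiece d
  obtain ⟨N, z, hz0, hne, hz⟩ := exists_fin_span_range_eq hfg (hWd one_mem) one_ne_zero
  exact ⟨N, z, hz0, hne, fun i ↦ isIntegrallyClosedIn_coordChart hle hz (hne i),
    hz.symm ▸ Submodule.subset_span.trans hWd, fun j ↦
      isIntegral_of_mem_integralPiece (d := d) (hz ▸ Submodule.subset_span ⟨j, rfl⟩)⟩

end Field

end Rees

universe u

/-! ### Points of projective space with values in a field -/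

section AwayLift

variable {ι A B σ : Type*} [CommRing A] [CommRing B] [SetLike σ A] [AddSubgroupClass σ A]
  [AddCommMonoid ι] [DecidableEq ι] {𝒜 : ι → σ} [GradedRing 𝒜]

/-- The extension of a ring homomorphism `φ` with `φ f` invertible to the degree zero part of the
localization at `f`. When `φ` is evaluation at a point of projective space, this is evaluation of
the regular functions on the chart `f ≠ 0`. -/
def awayLift (φ : A →+* B) {f : A} (hf : IsUnit (φ f)) :
    HomogeneousLocalization.Away 𝒜 f →+* B :=
  (IsLocalization.Away.lift f hf).comp (algebraMap _ (Localization.Away f))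

lemma awayLift_mk_mul (φ : A →+* B) {f : A} (hf : IsUnit (φ f))
    (c : HomogeneousLocalization.NumDenSameDeg 𝒜 (Submonoid.powers f)) :
    awayLift φ hf (HomogeneousLocalization.mk c) * φ c.den = φ c.num := by
  rw [← IsLocalization.Away.lift_eq (S := Localization.Away f) f hf,
    ← IsLocalization.Away.lift_eq (S := Localization.Away f) f hf, awayLift, RingHom.comp_apply,
    ← map_mul, HomogeneousLocalization.algebraMap_apply, HomogeneousLocalization.val_mk,
    Localization.mk_eq_mk', IsLocalization.mk'_spec]

lemma awayLift_comp_awayMap (φ : A →+* B) {f g x : A} {e : ι} (hg : g ∈ 𝒜 e) (hx : x = f * g)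
    (hf : IsUnit (φ f)) (hφx : IsUnit (φ x)) :
    (awayLift φ hφx).comp (HomogeneousLocalization.awayMap 𝒜 hg hx) = awayLift φ hf := by
  ext a
  simp only [awayLift, RingHom.comp_apply, HomogeneousLocalization.algebraMap_apply,
    HomogeneousLocalization.val_awayMap]
  rw [← RingHom.comp_apply]
  congr 1
  refine IsLocalization.ringHom_ext (Submonoid.powers f) (RingHom.ext fun p ↦ ?_)
  simp [Localization.awayLift, IsLocalization.Away.lift_eq]

end AwayLift

section ProjPoint

section Field

variable {k K σ : Type u} [Field k] [Field K] [Algebra k K]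

lemma aeval_eq_pow_mul_aeval_div {z : σ → K} {i : σ} (hzi : z i ≠ 0) {n : ℕ}
    {p : MvPolynomial σ k} (hp : p.IsHomogeneous n) :
    aeval z p = z i ^ n * aeval (fun j ↦ z j / z i) p := by
  rw [aeval_def, aeval_def, eval₂_eq, eval₂_eq, Finset.mul_sum]
  refine Finset.sum_congr rfl fun d hd ↦ ?_
  have hn : ∑ j ∈ d.support, d j = n := by
    simpa only [Finsupp.weight_apply, Finsupp.sum, Pi.one_apply, smul_eq_mul, mul_one] using
      hp (mem_support_iff.mp hd)
  simp only [div_pow, Finset.prod_div_distrib, Finset.prod_pow_eq_pow_sum, hn]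
  field_simp

lemma isUnit_aeval_X {z : σ → K} {i : σ} (hzi : z i ≠ 0) :
    IsUnit ((aeval z : MvPolynomial σ k →ₐ[k] K).toRingHom (X i)) := by
  simpa using hzi

variable (k) in
/-- Evaluation at the point with homogeneous coordinates `z` of the regular functions on the
standard chart `xᵢ ≠ 0` of projective space. -/
def chartEval (z : σ → K) {i : σ} (hzi : z i ≠ 0) :
    HomogeneousLocalization.Away (homogeneousSubmodule σ k) (X i) →+* K :=
  awayLift (aeval z : MvPolynomial σ k →ₐ[k] K).toRingHom (isUnit_aeval_X hzi)

lemma chartEval_mk (z : σ → K) {i : σ} (hzi : z i ≠ 0)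
    (c : HomogeneousLocalization.NumDenSameDeg (homogeneousSubmodule σ k)
      (Submonoid.powers (X i))) :
    chartEval k z hzi (HomogeneousLocalization.mk c) =
      aeval (fun j ↦ z j / z i) (c.num : MvPolynomial σ k) := by
  have hden : aeval (fun j ↦ z j / z i) (c.den : MvPolynomial σ k) = 1 := by
    obtain ⟨n, hn⟩ := c.den_mem
    rw [← hn, map_pow, aeval_X, div_self hzi, one_pow]
  have h := awayLift_mk_mul _ (isUnit_aeval_X (k := k) hzi) c
  simp only [AlgHom.toRingHom_eq_coe, RingHom.coe_coe] at h
  rw [aeval_eq_pow_mul_aeval_div hzi c.num.2, aeval_eq_pow_mul_aeval_div hzi c.den.2, hden,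
    mul_one, mul_comm] at h
  exact mul_left_cancel₀ (pow_ne_zero _ hzi) h

lemma range_chartEval (z : σ → K) {i : σ} (hzi : z i ≠ 0) :
    (chartEval k z hzi).range = (coordChart k z i).toSubring := by
  apply le_antisymm
  · rintro _ ⟨a, rfl⟩
    obtain ⟨c, rfl⟩ := HomogeneousLocalization.mk_surjective a
    rw [chartEval_mk, Subalgebra.mem_toSubring, coordChart, Algebra.adjoin_range_eq_range_aeval]
    exact ⟨_, rfl⟩
  · intro w hw
    induction hw using Algebra.adjoin_induction with
    | mem x hx =>
      obtain ⟨j, rfl⟩ := hx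
      refine ⟨HomogeneousLocalization.mk ⟨1, ⟨X j, isHomogeneous_X _ _⟩,
        ⟨X i, isHomogeneous_X _ _⟩, Submonoid.mem_powers _⟩, ?_⟩
      rw [chartEval_mk, aeval_X]
    | algebraMap r =>
      refine ⟨HomogeneousLocalization.mk ⟨0, ⟨C r, isHomogeneous_C _ _⟩,
        ⟨1, isHomogeneous_one _ _⟩, one_mem _⟩, ?_⟩
      rw [chartEval_mk, aeval_C]
    | add x y _ _ hx hy => exact add_mem hx hy
    | mul x y _ _ hx hy => exact mul_mem hx hy

lemma X_mem_homogeneousSubmodule (i : σ) : X i ∈ homogeneousSubmodule σ k 1 :=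
  isHomogeneous_X k i

/-- The `K`-point of projective space with homogeneous coordinates `z`, obtained from the standard
chart `xᵢ ≠ 0`; by `projPoint_eq_projPoint` it does not depend on `i`. -/
def projPoint (z : σ → K) {i : σ} (hzi : z i ≠ 0) :
    Spec (.of K) ⟶ Proj (homogeneousSubmodule σ k) :=
  Spec.map (CommRingCat.ofHom (chartEval k z hzi)) ≫
    Proj.awayι (homogeneousSubmodule σ k) (X i) (X_mem_homogeneousSubmodule i) one_pos

lemma projPoint_eq_projPoint (z : σ → K) {i j : σ} (hzi : z i ≠ 0) (hzj : z j ≠ 0) :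
    projPoint (k := k) z hzi = projPoint z hzj := by
  have hij : IsUnit ((aeval z : MvPolynomial σ k →ₐ[k] K).toRingHom (X i * X j)) := by
    rw [map_mul]
    exact (isUnit_aeval_X hzi).mul (isUnit_aeval_X hzj)
  simp only [projPoint, chartEval]
  rw [← awayLift_comp_awayMap _ (X_mem_homogeneousSubmodule j) rfl _ hij,
    ← awayLift_comp_awayMap _ (X_mem_homogeneousSubmodule i) (mul_comm _ _) (isUnit_aeval_X hzj)
      hij, CommRingCat.ofHom_comp, CommRingCat.ofHom_comp, Spec.map_comp, Spec.map_comp,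
    Category.assoc, Category.assoc, Proj.SpecMap_awayMap_awayι, Proj.SpecMap_awayMap_awayι]

variable (k σ) in
lemma algebraMap_homogeneousSubmodule_zero_bijective :
    Function.Bijective (algebraMap k (homogeneousSubmodule σ k 0)) := by
  refine ⟨fun a b h ↦ C_injective _ _ (congrArg Subtype.val h), fun ⟨p, hp⟩ ↦ ?_⟩
  exact ⟨coeff 0 p, Subtype.ext
    (totalDegree_eq_zero_iff_eq_C.mp (Nat.le_zero.mp (IsHomogeneous.totalDegree_le hp))).symm⟩

instance :
    IsScalarTower k (homogeneousSubmodule σ k 0) (MvPolynomial σ k) :=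
  ⟨fun a b c ↦ smul_mul_assoc a (b : MvPolynomial σ k) c⟩

lemma iSup_basicOpen_X : ⨆ i, Proj.basicOpen (homogeneousSubmodule σ k) (X i) = ⊤ := by
  refine Proj.iSup_basicOpen_eq_top' _ _ (fun i ↦ ⟨1, X_mem_homogeneousSubmodule i⟩) ?_
  have hle : Algebra.adjoin k (Set.range (X : σ → MvPolynomial σ k)) ≤
      (Algebra.adjoin (homogeneousSubmodule σ k 0)
        (Set.range (X : σ → MvPolynomial σ k))).restrictScalars k :=
    Algebra.adjoin_le Algebra.subset_adjoin
  rw [adjoin_range_X] at hle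
  exact top_le_iff.mp fun p _ ↦ hle Algebra.mem_top

end Field

lemma isProper_projSpaceToSpecC (N : ℕ) : IsProper (projSpaceToSpecC N) := by
  have : IsIso (CommRingCat.ofHom
      (algebraMap ℂ (homogeneousSubmodule (Fin (N + 1)) ℂ 0))) :=
    (ConcreteCategory.isIso_iff_bijective _).mpr
      (algebraMap_homogeneousSubmodule_zero_bijective ℂ _)
  have : Algebra.FiniteType (homogeneousSubmodule (Fin (N + 1)) ℂ 0)
      (MvPolynomial (Fin (N + 1)) ℂ) := .of_restrictScalars_finiteType ℂ _ _
  rw [projSpaceToSpecC]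
  infer_instance

lemma projPoint_comp_projSpaceToSpecC {K : Type} [Field K] [Algebra ℂ K] {N : ℕ}
    (z : Fin (N + 1) → K) {i : Fin (N + 1)} (hzi : z i ≠ 0) :
    projPoint z hzi ≫ projSpaceToSpecC N = Spec.map (CommRingCat.ofHom (algebraMap ℂ K)) := by
  rw [projPoint, projSpaceToSpecC, Category.assoc, Proj.awayι_toSpecZero_assoc, ← Spec.map_comp,
    ← Spec.map_comp, ← CommRingCat.ofHom_comp, ← CommRingCat.ofHom_comp]
  congr 2
  ext r
  exact (chartEval_mk z hzi _).trans (aeval_C _ r)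

end ProjPoint

/-! ### Affine points of a scheme and the sections at them -/

section SectionEval

variable {R : CommRingCat.{u}} {X Y : Scheme.{u}}

/-- The value at an affine point `l : Spec R ⟶ X` of the sections of `X` over an open set `U`
containing the image of `l`. -/
def sectionEval (l : Spec R ⟶ X) (U : X.Opens) (h : ⊤ ≤ l ⁻¹ᵁ U) : Γ(X, U) ⟶ R :=
  l.appLE U ⊤ h ≫ (Scheme.ΓSpecIso R).hom

lemma sectionEval_comp (l : Spec R ⟶ X) (i : X ⟶ Y) {D : Y.Opens} (h : ⊤ ≤ l ⁻¹ᵁ i ⁻¹ᵁ D) :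
    sectionEval (l ≫ i) D h = i.app D ≫ sectionEval l (i ⁻¹ᵁ D) h := by
  simp only [sectionEval, Scheme.Hom.app_eq_appLE, Scheme.Hom.appLE_comp_appLE_assoc]

lemma specMap_sectionEval_fromSpec (l : Spec R ⟶ X) {U : X.Opens} (hU : IsAffineOpen U)
    (h : ⊤ ≤ l ⁻¹ᵁ U) : Spec.map (sectionEval l U h) ≫ hU.fromSpec = l := by
  rw [sectionEval, Spec.map_comp, Category.assoc,
    IsAffineOpen.SpecMap_appLE_fromSpec _ _ (isAffineOpen_top _), IsAffineOpen.fromSpec_top,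
    Scheme.isoSpec_Spec_inv, ← Spec.map_comp_assoc]
  simp

lemma isIso_appLE_top_of_isIso_app {f : X ⟶ Y} {U : Y.Opens} [IsIso (f.app U)]
    (h : ⊤ ≤ f ⁻¹ᵁ U) : IsIso (f.appLE U ⊤ h) := by
  have : IsIso (homOfLE h) := ⟨homOfLE le_top, by subsingleton, by subsingleton⟩
  rw [Scheme.Hom.appLE]
  infer_instance

lemma sectionEval_injective (l : Spec R ⟶ X) [IsSchemeTheoreticallyDominant l] [QuasiCompact l]
    {U : X.Opens} (h : ⊤ ≤ l ⁻¹ᵁ U) : Function.Injective (sectionEval l U h) := by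
  have : IsIso (homOfLE h) := ⟨homOfLE le_top, by subsingleton, by subsingleton⟩
  have hres : Function.Injective
      ((Spec R).presheaf.map (homOfLE h).op ≫ (Scheme.ΓSpecIso R).hom) :=
    ((ConcreteCategory.isIso_iff_bijective _).mp inferInstance).1
  rw [sectionEval, Scheme.Hom.appLE, Category.assoc]
  exact hres.comp (l.app_injective U)

lemma range_sectionEval_comp_of_isClosedImmersion (l : Spec R ⟶ X) (i : X ⟶ Y)
    [IsClosedImmersion i] {D : Y.Opens} (hD : IsAffineOpen D) (h : ⊤ ≤ l ⁻¹ᵁ i ⁻¹ᵁ D) :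
    (sectionEval (l ≫ i) D h).hom.range = (sectionEval l (i ⁻¹ᵁ D) h).hom.range := by
  have hsurj : Function.Surjective (i.app D) := i.app_surjective _ hD
  rw [sectionEval_comp]
  exact SetLike.coe_injective (hsurj.range_comp (sectionEval l (i ⁻¹ᵁ D) h))

lemma range_sectionEval_eq_range {A : CommRingCat.{u}} {φ : A ⟶ R} {i : Spec A ⟶ X}
    [IsOpenImmersion i] {l : Spec R ⟶ X} (hl : l = Spec.map φ ≫ i) {U : X.Opens}
    (hU : i.opensRange = U) (h : ⊤ ≤ l ⁻¹ᵁ U) :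
    (sectionEval l U h).hom.range = φ.hom.range := by
  subst hl hU
  have htop : ⊤ ≤ i ⁻¹ᵁ i.opensRange := by simp
  have : IsIso (i.app i.opensRange) := i.isIso_app _ le_rfl
  have := isIso_appLE_top_of_isIso_app htop
  have hfac : sectionEval (Spec.map φ ≫ i) i.opensRange h =
      (i.appLE i.opensRange ⊤ htop ≫ (Scheme.ΓSpecIso A).hom) ≫ φ := by
    rw [sectionEval, ← Scheme.Hom.appLE_comp_appLE _ _ _ ⊤ _ htop le_top, Category.assoc,
      Category.assoc, ← Scheme.ΓSpecIso_naturality]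
    congr 1
  have hsurj : Function.Surjective (i.appLE i.opensRange ⊤ htop ≫ (Scheme.ΓSpecIso A).hom) :=
    ((ConcreteCategory.isIso_iff_bijective _).mp inferInstance).2
  rw [hfac]
  exact SetLike.coe_injective (hsurj.range_comp _)

end SectionEval

/-! ### The normal projective model -/

section Image

variable {X Y : Scheme.{u}} (f : X ⟶ Y) [QuasiCompact f]

instance : IsSchemeTheoreticallyDominant f.toImage := by
  rw [isSchemeTheoreticallyDominant_iff]
  refine Scheme.IdealSheafData.ext_of_iSup_eq_top
    (fun U : Y.affineOpens ↦ ⟨f.imageι ⁻¹ᵁ U.1, U.2.preimage _⟩)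
    (TopologicalSpace.IsOpenCover.comap (iSup_affineOpens_eq_top _) _) fun U ↦ ?_
  rw [Scheme.Hom.ker_apply, Scheme.IdealSheafData.ideal_bot]
  exact (RingHom.injective_iff_ker_eq_bot _).mp (f.toImage_app_injective U)

lemma isIntegral_of_isSchemeTheoreticallyDominant [IsIntegral X]
    [IsSchemeTheoreticallyDominant f] : IsIntegral Y := by
  have := IsSchemeTheoreticallyDominant.isReduced f
  have : IrreducibleSpace Y := by
    rw [irreducibleSpace_def, Set.top_eq_univ, ← f.denseRange.closure_range, ← Set.image_univ]
    exact ((IrreducibleSpace.isIrreducible_univ X).image _ f.continuous.continuousOn).closure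
  exact isIntegral_of_irreducibleSpace_of_isReduced _

end Image

lemma exists_ringEquiv_of_range_eq {k A K : Type*} [CommRing k] [CommRing A] [CommRing K]
    [Algebra k K] {C : Subalgebra k K} {ψ : A →+* K} (hψ : Function.Injective ψ)
    (hrange : ψ.range = C.toSubring) : ∃ e : A ≃+* C, ∀ a, (e a : K) = ψ a :=
  ⟨(RingEquiv.ofBijective ψ.rangeRestrict
    ⟨fun _ _ h ↦ hψ (congrArg Subtype.val h), ψ.rangeRestrict_surjective⟩).trans
      (RingEquiv.subringCongr hrange), fun _ ↦ rfl⟩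

lemma exists_isOpenImmersion_SpecMap_comp_eq {X : Scheme.{u}} {U : X.Opens} (hU : IsAffineOpen U)
    {k K : Type u} [CommRing k] [CommRing K] [Algebra k K] {C : Subalgebra k K}
    {ψ : Γ(X, U) ⟶ .of K} (hψ : Function.Injective ψ) (hrange : ψ.hom.range = C.toSubring) :
    ∃ i : Spec (.of C) ⟶ X, IsOpenImmersion i ∧
      Spec.map (CommRingCat.ofHom (algebraMap C K)) ≫ i = Spec.map ψ ≫ hU.fromSpec := by
  obtain ⟨e, he⟩ := exists_ringEquiv_of_range_eq hψ hrange
  have hfac : e.toCommRingCatIso.hom ≫ CommRingCat.ofHom (algebraMap C K) = ψ := by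
    ext a
    exact he a
  have := hU.isOpenImmersion_fromSpec
  refine ⟨Spec.map e.toCommRingCatIso.hom ≫ hU.fromSpec, inferInstance, ?_⟩
  rw [← Spec.map_comp_assoc, hfac]

lemma isIntegrallyClosed_stalk {X : Scheme.{u}} [IsIntegral X] {U : X.Opens}
    (hU : IsAffineOpen U) [IsIntegrallyClosed Γ(X, U)] {x : X} (hx : x ∈ U) :
    IsIntegrallyClosed (X.presheaf.stalk x) := by
  have : Nonempty U := ⟨⟨x, hx⟩⟩
  let := X.presheaf.algebra_section_stalk ⟨x, hx⟩
  have : IsLocalization.AtPrime (X.presheaf.stalk x) (hU.primeIdealOf ⟨x, hx⟩).asIdeal :=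
    hU.isLocalization_stalk ⟨x, hx⟩
  exact isIntegrallyClosed_of_isLocalization _ _
    (hU.primeIdealOf ⟨x, hx⟩).asIdeal.primeCompl_le_nonZeroDivisors

section ProjectiveModel

section Field

variable {k K σ : Type u} [Field k] [Field K] [Algebra k K] {z : σ → K}

lemma top_le_preimage_basicOpen_X {i j : σ} (hzi : z i ≠ 0) (hzj : z j ≠ 0) :
    ⊤ ≤ (projPoint (k := k) z hzj) ⁻¹ᵁ Proj.basicOpen (homogeneousSubmodule σ k) (X i) := by
  rw [projPoint_eq_projPoint z hzj hzi, ← Proj.opensRange_awayι _ _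
    (X_mem_homogeneousSubmodule i) one_pos]
  exact fun x _ ↦ ⟨_, rfl⟩

lemma range_sectionEval_projPoint {i j : σ} (hzi : z i ≠ 0) (hzj : z j ≠ 0) :
    (sectionEval (projPoint (k := k) z hzj) _ (top_le_preimage_basicOpen_X hzi hzj)).hom.range =
      (coordChart k z i).toSubring := by
  rw [range_sectionEval_eq_range (projPoint_eq_projPoint z hzj hzi)
    (Proj.opensRange_awayι _ _ (X_mem_homogeneousSubmodule i) one_pos)]
  exact range_chartEval z hzi

variable (k) in
/-- The chart `xᵢ ≠ 0` of the closure of the `K`-point with homogeneous coordinates `z`. -/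
abbrev imageChart (z : σ → K) {j : σ} (hzj : z j ≠ 0) (i : σ) :
    (projPoint (k := k) z hzj).image.Opens :=
  (projPoint z hzj).imageι ⁻¹ᵁ Proj.basicOpen (homogeneousSubmodule σ k) (X i)

lemma isAffineOpen_imageChart {j : σ} (hzj : z j ≠ 0) (i : σ) :
    IsAffineOpen (imageChart k z hzj i) :=
  (Proj.isAffineOpen_basicOpen _ _ (X_mem_homogeneousSubmodule i) one_pos).preimage _

lemma top_le_preimage_imageChart {i j : σ} (hzi : z i ≠ 0) (hzj : z j ≠ 0) :
    ⊤ ≤ (projPoint z hzj).toImage ⁻¹ᵁ imageChart k z hzj i := by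
  rw [← Scheme.Hom.comp_preimage, Scheme.Hom.toImage_imageι]
  exact top_le_preimage_basicOpen_X hzi hzj

/-- The closure is a closed subscheme, so the functions on its charts are restrictions of functions
on the charts of projective space. -/
lemma range_sectionEval_toImage {i j : σ} (hzi : z i ≠ 0) (hzj : z j ≠ 0) :
    (sectionEval (projPoint (k := k) z hzj).toImage _
      (top_le_preimage_imageChart hzi hzj)).hom.range = (coordChart k z i).toSubring := by
  rw [← range_sectionEval_projPoint hzi hzj, ← range_sectionEval_comp_of_isClosedImmersion _ _
    (Proj.isAffineOpen_basicOpen _ _ (X_mem_homogeneousSubmodule i) one_pos)]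
  simp only [Scheme.Hom.toImage_imageι]

lemma isIntegral_image_projPoint {j : σ} (hzj : z j ≠ 0) :
    IsIntegral (projPoint (k := k) z hzj).image :=
  isIntegral_of_isSchemeTheoreticallyDominant (projPoint z hzj).toImage

lemma isIntegrallyClosed_stalk_image_projPoint (hz : ∀ i, z i ≠ 0)
    [∀ i, IsIntegrallyClosedIn (coordChart k z i) K] (j : σ)
    (x : (projPoint (k := k) z (hz j)).image) :
    IsIntegrallyClosed ((projPoint z (hz j)).image.presheaf.stalk x) := by
  have := isIntegral_image_projPoint (k := k) (hz j)
  have hx : (projPoint z (hz j)).imageι x ∈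
      ⨆ i, Proj.basicOpen (homogeneousSubmodule σ k) (X i) := by
    rw [iSup_basicOpen_X]
    trivial
  obtain ⟨i, hxi⟩ := TopologicalSpace.Opens.mem_iSup.mp hx
  have : IsIntegrallyClosed (coordChart k z i) := .of_isIntegrallyClosedIn _ K
  obtain ⟨e, -⟩ := exists_ringEquiv_of_range_eq (C := coordChart k z i)
    (sectionEval_injective _ (top_le_preimage_imageChart (hz i) _))
    (range_sectionEval_toImage (hz i) (hz j))
  have : IsIntegrallyClosed Γ((projPoint z (hz j)).image, imageChart k z (hz j) i) :=
    .of_equiv e.symm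
  exact isIntegrallyClosed_stalk (isAffineOpen_imageChart (hz j) i) hxi

end Field

variable {K : Type} [Field K] [Algebra ℂ K] {N : ℕ}

lemma isProjectiveVariety_image_projPoint {z : Fin (N + 1) → K} {i : Fin (N + 1)} (hzi : z i ≠ 0) :
    IsProjectiveVariety (projPoint (k := ℂ) z hzi).image
      ((projPoint z hzi).imageι ≫ projSpaceToSpecC N) := by
  have := isProper_projSpaceToSpecC N
  exact ⟨isIntegral_image_projPoint hzi, inferInstance, inferInstance, N, _, inferInstance, rfl⟩

/-- The model is the closure of the `K`-point with homogeneous coordinates `z`, and its affine open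
subset is the chart on which the coordinate equal to `1` does not vanish. -/
theorem exists_normal_projective_model {z : Fin (N + 1) → K} {i : Fin (N + 1)} (hzi : z i = 1)
    (hz : ∀ j, z j ≠ 0) [∀ j, IsIntegrallyClosedIn (coordChart ℂ z j) K] :
    ∃ (X : Scheme) (sX : X ⟶ Spec (.of ℂ)) (ι : Spec (.of (Algebra.adjoin ℂ (Set.range z))) ⟶ X),
      IsProjectiveVariety X sX ∧ IsNormalScheme X ∧ IsOpenImmersion ι ∧
      ι ≫ sX = Spec.map (CommRingCat.ofHom (algebraMap ℂ (Algebra.adjoin ℂ (Set.range z)))) := by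
  let l := projPoint (k := ℂ) z (hz i)
  have hl : ⊤ ≤ l.toImage ⁻¹ᵁ imageChart ℂ z (hz i) i := top_le_preimage_imageChart (hz i) (hz i)
  have hC : coordChart ℂ z i = Algebra.adjoin ℂ (Set.range z) := by
    simp only [coordChart, hzi, div_one]
  obtain ⟨ι, hι, hlι⟩ := exists_isOpenImmersion_SpecMap_comp_eq (isAffineOpen_imageChart (hz i) i)
    (sectionEval_injective _ hl) (hC ▸ range_sectionEval_toImage (hz i) (hz i))
  refine ⟨l.image, l.imageι ≫ projSpaceToSpecC N, ι, isProjectiveVariety_image_projPoint (hz _),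
    isIntegrallyClosed_stalk_image_projPoint hz _, hι, ?_⟩
  obtain ⟨χ, hχ⟩ := Spec.map_surjective (ι ≫ l.imageι ≫ projSpaceToSpecC N)
  rw [specMap_sectionEval_fromSpec] at hlι
  rw [← hχ]
  have := congr($hlι ≫ l.imageι ≫ projSpaceToSpecC N)
  rw [Category.assoc, ← hχ, Scheme.Hom.toImage_imageι_assoc, projPoint_comp_projSpaceToSpecC,
    ← Spec.map_comp] at this
  refine congrArg Spec.map (CommRingCat.hom_ext (RingHom.ext fun c ↦ Subtype.ext ?_))
  exact congr($(Spec.map_injective this) c)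

end ProjectiveModel

/-! ### Coordinates adapted to a discrete valuation ring -/

section AdaptedCoordinates

lemma exists_finite_subset_valuationSubring_adjoin_eq_top (k : Type*) {K : Type*} [Field k]
    [Field K] [Algebra k K] [Algebra.EssFiniteType k K] (A : ValuationSubring K) :
    ∃ t : Set K, t.Finite ∧ t ⊆ A ∧ IntermediateField.adjoin k t = ⊤ := by
  obtain ⟨s, hs⟩ := IntermediateField.fg_top k K
  refine ⟨(s ∪ Inv.inv '' (s : Set K)) ∩ A,
    (s.finite_toSet.union (s.finite_toSet.image _)).inter_of_left _, Set.inter_subset_right, ?_⟩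
  rw [eq_top_iff, ← hs, IntermediateField.adjoin_le_iff]
  intro x hx
  rcases A.mem_or_inv_mem x with hxA | hxA
  · exact IntermediateField.subset_adjoin k _ ⟨.inl hx, hxA⟩
  · exact inv_mem_iff.mp (IntermediateField.subset_adjoin k _ ⟨.inr ⟨x, hx, rfl⟩, hxA⟩)

lemma mem_valuationSubring_of_isIntegral {K : Type*} [Field K] {A : ValuationSubring K}
    {B : Subring K} (hB : B ≤ A.toSubring) {x : K} (hx : _root_.IsIntegral B x) : x ∈ A := by
  have hxA : _root_.IsIntegral A x :=
    hx.map_of_comp_eq (Subring.inclusion hB) (.id K) rfl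
  obtain ⟨a, rfl⟩ := IsIntegrallyClosed.isIntegral_iff.mp hxA
  exact a.2

variable (k K R L : Type u) [Field k] [Field K] [Field L] [Algebra k K] [Algebra K L]
  [Algebra k L] [IsScalarTower k K L] [CommRing R] [IsDomain R] [Algebra k R] [Algebra R L]
  [IsFractionRing R L] [IsScalarTower k R L]

variable {K} in
lemma adjoin_le_restrictedValuationSubring [ValuationRing R] {W : Set K}
    (hW : W ⊆ restrictedValuationSubring K R L) :
    (Algebra.adjoin k W).toSubring ≤ (restrictedValuationSubring K R L).toSubring :=
  Algebra.adjoin_le (S := { (restrictedValuationSubring K R L).toSubring with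
    algebraMap_mem' c := (algebraMap k (restrictedValuationSubring K R L) c).2 }) hW

variable [IsDiscreteValuationRing R] [CharZero k] [Algebra.EssFiniteType k K]
  [Algebra.EssFiniteType k R]

theorem exists_normal_projective_coordinates_height_comap_le_one :
    ∃ (N : ℕ) (z : Fin (N + 1) → K), z 0 = 1 ∧ (∀ i, z i ≠ 0) ∧
      (∀ i, IsIntegrallyClosedIn (coordChart k z i) K) ∧
      IntermediateField.adjoin k (Set.range z) = ⊤ ∧
      ∃ j : Algebra.adjoin k (Set.range z) →ₐ[k] R, (∀ b, algebraMap R L (j b) = algebraMap K L b) ∧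
        ((IsLocalRing.maximalIdeal R).comap j).height ≤ 1 := by
  let 𝒪 := restrictedValuationSubring K R L
  obtain ⟨s, hs, hs𝒪, hheight⟩ := exists_finite_height_comap_maximalIdeal_le_one k K R L
  obtain ⟨t, ht, ht𝒪, htop⟩ := exists_finite_subset_valuationSubring_adjoin_eq_top k 𝒪
  let W : Set K := insert 1 (s ∪ t)
  have hW𝒪 : W ⊆ 𝒪 := Set.insert_subset (one_mem 𝒪) (Set.union_subset hs𝒪 ht𝒪)
  have hWtop : IntermediateField.adjoin k W = ⊤ :=
    top_unique (htop ▸ IntermediateField.adjoin.mono k t W fun x hx ↦ .inr (.inr hx))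
  obtain ⟨N, z, hz0, hz, hnorm, hWz, hzW⟩ :=
    exists_normal_projective_coordinates ((hs.union ht).insert 1) (Set.mem_insert 1 _) hWtop
  have hWz' : W ⊆ Algebra.adjoin k (Set.range z) := hWz.trans (Algebra.span_le_adjoin k _)
  have hz𝒪 : Set.range z ⊆ 𝒪 := Set.range_subset_iff.mpr fun i ↦
    mem_valuationSubring_of_isIntegral (adjoin_le_restrictedValuationSubring k R L hW𝒪) (hzW i)
  let j : Algebra.adjoin k (Set.range z) →ₐ[k] R :=
    { (algebraMap 𝒪 R).comp (Subring.inclusion (adjoin_le_restrictedValuationSubring k R L hz𝒪))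
      with commutes' c := (IsScalarTower.algebraMap_apply k 𝒪 R c).symm }
  have hj (b) : algebraMap R L (j b) = algebraMap K L b :=
    (IsScalarTower.algebraMap_apply 𝒪 R L _).symm
  refine ⟨N, z, hz0, hz, hnorm, ?_, j, hj, hheight _ j hj fun x hx ↦ hWz' (.inr (.inl hx))⟩
  rw [eq_top_iff, ← hWtop, IntermediateField.adjoin_le_iff]
  exact hWz'.trans (IntermediateField.algebra_adjoin_le_adjoin k _)

end AdaptedCoordinates

open IsLocalRing (closedPoint maximalIdeal)

/-! ### Birational maps -/

section LocalIsomorphism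

lemma exists_forall_algebraMap_eq_pow_mul {A B L : Type*} [CommRing A] [CommRing B]
    [CommRing L] [Algebra A B] [Algebra A L] [Algebra B L] [IsScalarTower A B L] (M : Submonoid A)
    [IsLocalization M L] [Algebra.FiniteType A B] (hB : Function.Injective (algebraMap B L)) :
    ∃ a ∈ M, ∀ b : B, ∃ (n : ℕ) (c : A), algebraMap A B c = algebraMap A B a ^ n * b := by
  obtain ⟨s, hs⟩ := Algebra.FiniteType.out (R := A) (A := B)
  obtain ⟨a, ha⟩ := IsLocalization.exist_integer_multiples M s (algebraMap B L)
  refine ⟨a, a.2, fun b ↦ ?_⟩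
  obtain ⟨n, hn⟩ := Algebra.pow_smul_mem_of_smul_subset_of_mem_adjoin (algebraMap A B a) (s : Set B)
    ⊥ (by
      rintro _ ⟨b, hb, rfl⟩
      obtain ⟨c, hc⟩ := ha b hb
      refine ⟨c, hB ?_⟩
      simpa [IsScalarTower.algebraMap_apply A B L, Algebra.smul_def] using hc)
    (hs ▸ trivial : b ∈ Algebra.adjoin A (s : Set B)) ⟨a, rfl⟩
  obtain ⟨c, hc⟩ := hn n le_rfl
  exact ⟨n, c, hc⟩

lemma isLocalization_away_of_forall_exists {A B C : Type*} [CommRing A] [CommRing B] [CommRing C]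
    [Algebra A B] [Algebra A C] [Algebra B C] [IsScalarTower A B C] (a : A)
    [IsLocalization.Away (algebraMap A B a) C] (hAB : Function.Injective (algebraMap A B))
    (ha : ∀ b : B, ∃ (n : ℕ) (c : A), algebraMap A B c = algebraMap A B a ^ n * b) :
    IsLocalization.Away a C := by
  have hunit : IsUnit (algebraMap A C a) := by
    rw [IsScalarTower.algebraMap_apply A B C]
    exact IsLocalization.Away.algebraMap_isUnit _
  refine IsLocalization.Away.mk a hunit (fun x ↦ ?_) fun x y hxy ↦ ?_
  · obtain ⟨m, b, hb⟩ := IsLocalization.Away.surj (algebraMap A B a) x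
    obtain ⟨n, c, hc⟩ := ha b
    refine ⟨n + m, c, ?_⟩
    rw [IsScalarTower.algebraMap_apply A B C c, hc, map_mul, map_pow, ← hb,
      IsScalarTower.algebraMap_apply A B C a]
    ring
  · rw [IsScalarTower.algebraMap_apply A B C, IsScalarTower.algebraMap_apply A B C] at hxy
    obtain ⟨n, hn⟩ := IsLocalization.Away.exists_of_eq (algebraMap A B a) hxy
    exact ⟨n, hAB (by simpa using hn)⟩

variable {X Y : Scheme.{u}} (f : X ⟶ Y) {x : X}

lemma exists_forall_appLE_eq_pow_mul_of_isIso_stalkMap [IsIntegral X] [IsIntegral Y]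
    [LocallyOfFiniteType f] [IsIso (f.stalkMap x)] {A : Y.Opens} (hA : IsAffineOpen A)
    {B : X.Opens} (hB : IsAffineOpen B) (hx : x ∈ B) (hBA : B ≤ f ⁻¹ᵁ A) :
    Function.Injective (f.appLE A B hBA) ∧ ∃ a, x ∈ X.basicOpen (f.appLE A B hBA a) ∧
      ∀ b, ∃ (n : ℕ) (c : Γ(Y, A)), f.appLE A B hBA c = f.appLE A B hBA a ^ n * b := by
  have hfx : f x ∈ A := hBA hx
  let := (f.appLE A B hBA).hom.toAlgebra
  let := X.presheaf.algebra_section_stalk ⟨x, hx⟩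
  let := Y.presheaf.algebra_section_stalk ⟨f x, hfx⟩
  let := (Y.presheaf.germ A (f x) hfx ≫ f.stalkMap x).hom.toAlgebra
  have htower : Y.presheaf.germ A (f x) hfx ≫ f.stalkMap x =
      f.appLE A B hBA ≫ X.presheaf.germ B x hx := by
    rw [Scheme.Hom.germ_stalkMap, Scheme.Hom.appLE, Category.assoc, X.presheaf.germ_res]
  have : IsScalarTower Γ(Y, A) Γ(X, B) (X.presheaf.stalk x) :=
    .of_algebraMap_eq' congr(($htower).hom)
  have := hA.isLocalization_stalk ⟨f x, hfx⟩
  have : IsLocalization (hA.primeIdealOf ⟨f x, hfx⟩).asIdeal.primeCompl (X.presheaf.stalk x) :=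
    IsLocalization.isLocalization_of_algEquiv _ (AlgEquiv.ofRingEquiv
      (f := (asIso (f.stalkMap x)).commRingCatIsoToRingEquiv) fun _ ↦ rfl)
  have : Algebra.FiniteType Γ(Y, A) Γ(X, B) := f.finiteType_appLE hA hB hBA
  have hAB : Function.Injective (algebraMap Γ(Y, A) (X.presheaf.stalk x)) :=
    ((asIso (f.stalkMap x)).commRingCatIsoToRingEquiv.injective).comp
      (germ_injective_of_isIntegral _ (f x) hfx)
  obtain ⟨a, ha, hab⟩ := exists_forall_algebraMap_eq_pow_mul
    (hA.primeIdealOf ⟨f x, hfx⟩).asIdeal.primeCompl (germ_injective_of_isIntegral _ x hx)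
  refine ⟨?_, a, ?_, hab⟩
  · rw [IsScalarTower.algebraMap_eq _ Γ(X, B), RingHom.coe_comp] at hAB
    exact hAB.of_comp
  · rw [X.mem_basicOpen _ _ hx]
    have := IsLocalization.map_units (X.presheaf.stalk x) ⟨a, ha⟩
    rwa [IsScalarTower.algebraMap_apply _ Γ(X, B)] at this

lemma exists_isOpenImmersion_ι_comp_of_isIso_stalkMap [IsIntegral X] [IsIntegral Y]
    [LocallyOfFiniteType f] [IsIso (f.stalkMap x)] :
    ∃ V : X.Opens, x ∈ V ∧ IsOpenImmersion (V.ι ≫ f) := by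
  obtain ⟨A, hA, hxA, -⟩ := exists_isAffineOpen_mem_and_subset (x := f x) (U := ⊤) trivial
  obtain ⟨B, hB, hxB, hBA⟩ := exists_isAffineOpen_mem_and_subset (x := x) (U := f ⁻¹ᵁ A) hxA
  obtain ⟨hinj, a, hxa, hab⟩ :=
    exists_forall_appLE_eq_pow_mul_of_isIso_stalkMap f hA hB hxB hBA
  let V := X.basicOpen (f.appLE A B hBA a)
  have hV : IsAffineOpen V := hB.basicOpen _
  have hVB : V ≤ B := X.basicOpen_le _
  let := (f.appLE A B hBA).hom.toAlgebra
  let := (f.appLE A V (hVB.trans hBA)).hom.toAlgebra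
  have : IsScalarTower Γ(Y, A) Γ(X, B) Γ(X, V) :=
    .of_algebraMap_eq' (congrArg CommRingCat.Hom.hom (f.appLE_map hBA (homOfLE hVB).op)).symm
  have : IsLocalization.Away (algebraMap Γ(Y, A) Γ(X, B) a) Γ(X, V) := hB.isLocalization_basicOpen _
  have := isLocalization_away_of_forall_exists (C := Γ(X, V)) a hinj hab
  have : IsOpenImmersion (Spec.map (f.appLE A V (hVB.trans hBA))) :=
    IsOpenImmersion.of_isLocalization (S := Γ(X, V)) a
  refine ⟨V, hxa, ?_⟩
  rw [← hV.isoSpec_hom_fromSpec, Category.assoc,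
    ← IsAffineOpen.SpecMap_appLE_fromSpec f hA hV (hVB.trans hBA)]
  infer_instance

lemma isIso_stalkMap_of_fromSpecStalk_comp_eq {y : Y}
    (φ : Y.presheaf.stalk y ≅ X.presheaf.stalk x)
    (h : X.fromSpecStalk x ≫ f = Spec.map φ.hom ≫ Y.fromSpecStalk y) : IsIso (f.stalkMap x) := by
  obtain rfl : f x = y := by
    have hx : f (X.fromSpecStalk x (closedPoint _)) =
      Y.fromSpecStalk y (Spec.map φ.hom (closedPoint _)) := congr($h (closedPoint _))
    have hφ : Spec.map φ.hom (closedPoint _) = closedPoint _ :=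
      IsLocalRing.comap_closedPoint φ.hom.hom
    rwa [hφ, Scheme.fromSpecStalk_closedPoint, Scheme.fromSpecStalk_closedPoint] at hx
  have : f.stalkMap x = φ.hom := by
    apply Spec.map_injective
    rw [← cancel_mono (Y.fromSpecStalk (f x)), Scheme.SpecMap_stalkMap_fromSpecStalk, h]
  rw [this]
  infer_instance

end LocalIsomorphism

section Birational

lemma genericPoint_mem_domain {X Y : Scheme.{u}} [IrreducibleSpace X]
    (f : X.PartialMap Y) : genericPoint X ∈ f.domain :=
  (genericPoint_specializes _).mem_open f.domain.2 f.dense_domain.nonempty.choose_spec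

lemma fromSpecStalk_toScheme_eq {X : Scheme.{u}} (U : X.Opens) (x : U.toScheme) (hx : U.ι x ∈ U) :
    U.toScheme.fromSpecStalk x = Spec.map (U.ι.stalkMap x) ≫ U.fromSpecStalkOfMem (U.ι x) hx := by
  rw [← cancel_mono U.ι, Category.assoc, Scheme.Opens.fromSpecStalkOfMem_ι,
    Scheme.SpecMap_stalkMap_fromSpecStalk]

lemma isIso_stalkMap_of_fromSpecStalkOfMem_comp_eq {X Y : Scheme.{u}} {U : X.Opens}
    (f : U.toScheme ⟶ Y) {x : X} (hx : x ∈ U) {y : Y} (φ : Y.presheaf.stalk y ≅ X.presheaf.stalk x)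
    (h : U.fromSpecStalkOfMem x hx ≫ f = Spec.map φ.hom ≫ Y.fromSpecStalk y) :
    IsIso (f.stalkMap ⟨x, hx⟩) := by
  obtain ⟨p, rfl⟩ : ∃ p : U.toScheme, U.ι p = x := ⟨⟨x, hx⟩, rfl⟩
  refine isIso_stalkMap_of_fromSpecStalk_comp_eq f (x := p) (φ ≪≫ asIso (U.ι.stalkMap p)) ?_
  rw [fromSpecStalk_toScheme_eq _ _ hx, Category.assoc, h, Iso.trans_hom, Spec.map_comp,
    Category.assoc, asIso_hom]

lemma exists_partialIso_iso_hom_comp_ι_eq {X Y : Scheme.{u}} [IsIntegral X] [IsIntegral Y]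
    (f : X.PartialMap Y) [LocallyOfFiniteType f.hom] (φ : Y.functionField ≅ X.functionField)
    (hf : f.fromFunctionField = Spec.map φ.hom ≫ Y.fromSpecStalk (genericPoint Y)) :
    ∃ (e : X.PartialIso Y) (hle : e.source ≤ f.domain),
      e.iso.hom ≫ e.target.ι = X.homOfLE hle ≫ f.hom := by
  have hη := genericPoint_mem_domain f
  have : Nonempty f.domain := ⟨_, hη⟩
  have := isIso_stalkMap_of_fromSpecStalkOfMem_comp_eq f.hom hη φ hf
  obtain ⟨V, hηV, hV⟩ := exists_isOpenImmersion_ι_comp_of_isIso_stalkMap f.hom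
    (x := ⟨_, hη⟩)
  let j : (f.domain.ι ''ᵁ V).toScheme ⟶ Y := (f.domain.ι.isoImage V).inv ≫ V.ι ≫ f.hom
  have hηV' : genericPoint X ∈ f.domain.ι ''ᵁ V := ⟨_, hηV, rfl⟩
  have hle : f.domain.ι ''ᵁ V ≤ f.domain := by rintro _ ⟨v, -, rfl⟩; exact v.2
  refine ⟨{ source := f.domain.ι ''ᵁ V
            dense_source := (f.domain.ι ''ᵁ V).2.dense ⟨_, hηV'⟩
            target := j.opensRange
            dense_target := j.opensRange.2.dense ⟨j ⟨_, hηV'⟩, _, rfl⟩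
            iso := j.isoOpensRange }, hle, ?_⟩
  have hι : (f.domain.ι.isoImage V).inv ≫ V.ι = X.homOfLE hle := by
    rw [← cancel_mono f.domain.ι, Category.assoc, Scheme.Hom.isoImage_inv_ι, Scheme.homOfLE_ι]
  rw [Scheme.Hom.isoOpensRange_hom_ι, ← hι, Category.assoc]

lemma exists_partialIso_of_functionField_iso {X Y Z : Scheme.{u}} [IsIntegral X]
    [IsIntegral Y] (sX : X ⟶ Z) (sY : Y ⟶ Z) [LocallyOfFiniteType sX] [LocallyOfFiniteType sY]
    (φ : Y.functionField ≅ X.functionField)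
    (hφ : Spec.map φ.hom ≫ Y.fromSpecStalk (genericPoint Y) ≫ sY =
      X.fromSpecStalk (genericPoint X) ≫ sX) :
    ∃ e : X.PartialIso Y, e.IsOver sX sY ∧
      e.toPartialMap.fromFunctionField = Spec.map φ.hom ≫ Y.fromSpecStalk (genericPoint Y) := by
  let f := Scheme.PartialMap.ofFromSpecStalk sX sY
    (Spec.map φ.hom ≫ Y.fromSpecStalk (genericPoint Y)) (by rwa [Category.assoc])
  have hf : f.hom ≫ sY = f.domain.ι ≫ sX := Scheme.PartialMap.ofFromSpecStalk_comp ..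
  have hfη : f.fromFunctionField = Spec.map φ.hom ≫ Y.fromSpecStalk (genericPoint Y) :=
    Scheme.PartialMap.fromSpecStalkOfMem_ofFromSpecStalk ..
  have : LocallyOfFiniteType f.hom := by
    have : LocallyOfFiniteType (f.hom ≫ sY) := hf ▸ inferInstance
    exact locallyOfFiniteType_of_comp f.hom sY
  obtain ⟨e, hle, he⟩ := exists_partialIso_iso_hom_comp_ι_eq f φ hfη
  have hres : e.toPartialMap = f.restrict e.source e.dense_source hle :=
    congrArg (Scheme.PartialMap.mk e.source e.dense_source) he
  refine ⟨e, ?_, by rw [hres, Scheme.PartialMap.fromFunctionField_restrict, hfη]⟩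
  rw [Scheme.PartialIso.IsOver, ← Category.assoc, he, Category.assoc, hf, Scheme.homOfLE_ι_assoc]

end Birational

section PartialMap

variable {X Y Z : Scheme.{u}}

lemma exists_comp_hom_eq [PreirreducibleSpace X] [Nonempty Y] (f : X.PartialMap Y)
    [IsDominant f.hom] (g : Y.PartialMap Z) :
    ∃ (hle : (f.comp g).domain ≤ f.domain)
      (m : (f.comp g).domain.toScheme ⟶ g.domain.toScheme),
      m ≫ g.domain.ι = X.homOfLE hle ≫ f.hom ∧ (f.comp g).hom = m ≫ g.hom := by
  have hle : f.domain.ι ''ᵁ f.hom ⁻¹ᵁ g.domain ≤ f.domain := by rintro _ ⟨v, -, rfl⟩; exact v.2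
  have hι : (f.domain.ι.isoImage (f.hom ⁻¹ᵁ g.domain)).inv ≫ Scheme.Opens.ι _ = X.homOfLE hle := by
    rw [← cancel_mono f.domain.ι, Category.assoc, Scheme.Hom.isoImage_inv_ι, Scheme.homOfLE_ι]
  refine ⟨hle, (f.domain.ι.isoImage (f.hom ⁻¹ᵁ g.domain)).inv ≫ f.hom ∣_ g.domain, ?_,
    (Category.assoc _ _ _).symm⟩
  exact (Category.assoc _ _ _).trans
    ((congrArg (_ ≫ ·) (morphismRestrict_ι _ _)).trans
      ((Category.assoc _ _ _).symm.trans (congrArg (· ≫ f.hom) hι)))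

lemma fromSpecStalkOfMem_homOfLE {U V : X.Opens} (h : U ≤ V) (x : X) (hx : x ∈ U) :
    U.fromSpecStalkOfMem x hx ≫ X.homOfLE h = V.fromSpecStalkOfMem x (h hx) := by
  rw [← cancel_mono V.ι, Category.assoc, Scheme.homOfLE_ι, Scheme.Opens.fromSpecStalkOfMem_ι,
    Scheme.Opens.fromSpecStalkOfMem_ι]

lemma stalkSpecializes_fromSpecStalkOfMem {U : X.Opens} {x y : X} (h : x ⤳ y)
    (hx : x ∈ U) (hy : y ∈ U) :
    Spec.map (X.presheaf.stalkSpecializes h) ≫ U.fromSpecStalkOfMem y hy =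
      U.fromSpecStalkOfMem x hx := by
  rw [← cancel_mono U.ι, Category.assoc, Scheme.Opens.fromSpecStalkOfMem_ι,
    Scheme.Opens.fromSpecStalkOfMem_ι, Scheme.SpecMap_stalkSpecializes_fromSpecStalk]

lemma fromSpecStalkOfMem_comp_closedPoint {U : X.Opens} {x : X} (hx : x ∈ U) (f : U.toScheme ⟶ Z) :
    (U.fromSpecStalkOfMem x hx ≫ f) (closedPoint (X.presheaf.stalk x)) = f ⟨x, hx⟩ := by
  refine congrArg f (U.ι.isOpenEmbedding.injective ?_)
  exact congr($(U.fromSpecStalkOfMem_ι x hx) (closedPoint (X.presheaf.stalk x))).trans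
    Scheme.fromSpecStalk_closedPoint

lemma fromFunctionField_comp_of_eq [IrreducibleSpace X] [IrreducibleSpace Y]
    (f : X.PartialMap Y) [IsDominant f.hom] (g : Y.PartialMap Z)
    {φ : Y.functionField ⟶ X.functionField}
    (h : f.fromFunctionField = Spec.map φ ≫ Y.fromSpecStalk (genericPoint Y)) :
    (f.comp g).fromFunctionField = Spec.map φ ≫ g.fromFunctionField := by
  obtain ⟨hle, m, hmf, hmg⟩ := exists_comp_hom_eq f g
  have hm : (f.comp g).domain.fromSpecStalkOfMem _ (genericPoint_mem_domain _) ≫ m =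
      Spec.map φ ≫ g.domain.fromSpecStalkOfMem _ (genericPoint_mem_domain g) := by
    rw [← cancel_mono g.domain.ι, Category.assoc, hmf, ← Category.assoc,
      fromSpecStalkOfMem_homOfLE, Category.assoc, Scheme.Opens.fromSpecStalkOfMem_ι]
    exact h
  calc (f.comp g).fromFunctionField
      = (f.comp g).domain.fromSpecStalkOfMem _ (genericPoint_mem_domain _) ≫ m ≫ g.hom :=
        congrArg (_ ≫ ·) hmg
    _ = Spec.map φ ≫ g.fromFunctionField := by rw [reassoc_of% hm]; rfl

lemma exists_comp_eq_of_comp_toPartialMap_equiv [PreirreducibleSpace X] [Nonempty Y]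
    (f : X.PartialMap Y) [IsDominant f.hom] (e : Y.PartialIso Z) (f' : X.PartialMap Z)
    (h : (f.comp e.toPartialMap).equiv f') :
    ∃ (T : X.Opens) (_ : Dense (T : Set X)) (hf : T ≤ f.domain) (hf' : T ≤ f'.domain)
      (g : T.toScheme ⟶ e.source.toScheme),
      g ≫ e.source.ι = X.homOfLE hf ≫ f.hom ∧
      g ≫ e.iso.hom ≫ e.target.ι = X.homOfLE hf' ≫ f'.hom := by
  obtain ⟨T, hT, hTf, hTf', heq⟩ := h
  obtain ⟨hle, (m : (f.comp e.toPartialMap).domain.toScheme ⟶ e.source.toScheme),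
    (hmf : m ≫ e.source.ι = _), hme⟩ := exists_comp_hom_eq f e.toPartialMap
  refine ⟨T, hT, hTf.trans hle, hTf', X.homOfLE hTf ≫ m, ?_, ?_⟩
  · rw [Category.assoc, hmf, Scheme.homOfLE_homOfLE_assoc]
  · exact (Category.assoc _ _ _).trans ((congrArg (X.homOfLE hTf ≫ ·) hme).symm.trans heq)

lemma exists_SpecMap_fromSpecStalk_eq {R : CommRingCat.{u}} [IsLocalRing R] (l : Spec R ⟶ X)
    {x : X} (hx : l (closedPoint R) = x) :
    ∃ φ : X.presheaf.stalk x ⟶ R, Spec.map φ ≫ X.fromSpecStalk x = l := by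
  subst hx
  exact ⟨_, Scheme.Spec_stalkClosedPointTo_fromSpecStalk l⟩

lemma hom_genericPoint [IrreducibleSpace X] [IrreducibleSpace Y] (f : X.PartialMap Y)
    [IsDominant f.hom] :
    f.hom ⟨genericPoint X, genericPoint_mem_domain f⟩ = genericPoint Y := by
  have hspec (u : f.domain) : f.hom ⟨genericPoint X, genericPoint_mem_domain f⟩ ⤳ f.hom u :=
    (f.domain.ι.isOpenEmbedding.isInducing.specializes_iff.mp (genericPoint_specializes _)).map
      f.hom.continuous
  have hgen : IsGenericPoint (f.hom ⟨genericPoint X, genericPoint_mem_domain f⟩) Set.univ := by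
    rw [IsGenericPoint, ← Set.univ_subset_iff, ← f.hom.denseRange.closure_eq]
    exact closure_minimal (by rintro _ ⟨u, rfl⟩; exact (hspec u).mem_closure) isClosed_closure
  exact hgen.eq (genericPoint_spec Y)

lemma exists_fromFunctionField_eq [IrreducibleSpace X] [IrreducibleSpace Y] (f : X.PartialMap Y)
    [IsDominant f.hom] :
    ∃ φ : Y.functionField ⟶ X.functionField,
      f.fromFunctionField = Spec.map φ ≫ Y.fromSpecStalk (genericPoint Y) := by
  obtain ⟨φ, hφ⟩ := exists_SpecMap_fromSpecStalk_eq f.fromFunctionField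
    ((fromSpecStalkOfMem_comp_closedPoint _ _).trans (hom_genericPoint f))
  exact ⟨φ, hφ.symm⟩

lemma isDominant_SpecMap_stalkSpecializes [IsIntegral X] (x : X) :
    IsDominant (Spec.map (X.presheaf.stalkSpecializes (genericPoint_specializes x))) := by
  constructor
  have : Function.Injective (X.presheaf.stalkSpecializes (genericPoint_specializes x)).hom :=
    IsFractionRing.injective (X.presheaf.stalk x) X.functionField
  exact (PrimeSpectrum.denseRange_comap_iff_ker_le_nilRadical _).mpr
    ((RingHom.injective_iff_ker_eq_bot _).mp this ▸ bot_le)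

lemma fromFunctionField_comp_of_comp_eq [IrreducibleSpace X] {sX : X ⟶ Z} {sY : Y ⟶ Z}
    (f : X.PartialMap Y) (hf : f.hom ≫ sY = f.domain.ι ≫ sX) :
    f.fromFunctionField ≫ sY = X.fromSpecStalk (genericPoint X) ≫ sX := by
  unfold Scheme.PartialMap.fromFunctionField Scheme.PartialMap.fromSpecStalkOfMem
  rw [Category.assoc, hf, Scheme.Opens.fromSpecStalkOfMem_ι_assoc]

lemma exists_equiv_fromSpecStalkOfMem_eq {B : Scheme.{u}} [IsIntegral X] (sX : X ⟶ B) (sY : Y ⟶ B)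
    [B.IsSeparated] [LocallyOfFiniteType sY] (f : X.PartialMap Y)
    (hf : f.fromFunctionField ≫ sY = X.fromSpecStalk (genericPoint X) ≫ sX)
    {x : X} (l : Spec (X.presheaf.stalk x) ⟶ Y)
    (hl : Spec.map (X.presheaf.stalkSpecializes (genericPoint_specializes x)) ≫ l =
      f.fromFunctionField) :
    ∃ (f' : X.PartialMap Y) (hx : x ∈ f'.domain), f.equiv f' ∧ f'.fromSpecStalkOfMem hx = l := by
  have := isDominant_SpecMap_stalkSpecializes x
  have h : l ≫ sY = X.fromSpecStalk x ≫ sX := by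
    refine ext_of_isDominant
      (Spec.map (X.presheaf.stalkSpecializes (genericPoint_specializes x))) ?_
    rw [reassoc_of% hl, Scheme.SpecMap_stalkSpecializes_fromSpecStalk_assoc, hf]
  have hx := Scheme.PartialMap.mem_domain_ofFromSpecStalk sX sY l h
  have hl' := Scheme.PartialMap.fromSpecStalkOfMem_ofFromSpecStalk sX sY l h
  refine ⟨.ofFromSpecStalk sX sY l h, hx, ?_, hl'⟩
  refine Scheme.PartialMap.equiv_of_fromSpecStalkOfMem_eq _ _ (genericPoint_mem_domain f)
    (genericPoint_mem_domain _) ?_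
  calc f.fromFunctionField
      = Spec.map (X.presheaf.stalkSpecializes (genericPoint_specializes x)) ≫
          (Scheme.PartialMap.ofFromSpecStalk sX sY l h).fromSpecStalkOfMem hx := by rw [hl', hl]
    _ = (Scheme.PartialMap.ofFromSpecStalk sX sY l h).fromFunctionField := by
      exact (Category.assoc _ _ _).symm.trans
        (congrArg (· ≫ _) (stalkSpecializes_fromSpecStalkOfMem _ _ hx))

end PartialMap

/-! ### The centre of a divisor on a model -/

section AffineChart

variable {A : CommRingCat.{u}} {X : Scheme.{u}}

lemma exists_isLocalization_stalk (i : Spec A ⟶ X) [IsOpenImmersion i] {p : PrimeSpectrum A}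
    {x : X} (hx : i p = x) : ∃ ψ : A ⟶ X.presheaf.stalk x, Spec.map ψ ≫ i = X.fromSpecStalk x ∧
      @IsLocalization.AtPrime _ _ (X.presheaf.stalk x) _ ψ.hom.toAlgebra p.asIdeal _ := by
  have hiso (q : Spec A) : i q = x → ∃ e : X.presheaf.stalk x ≅ (Spec A).presheaf.stalk q,
      Spec.map e.hom ≫ X.fromSpecStalk x = (Spec A).fromSpecStalk q ≫ i := by
    rintro rfl
    exact ⟨asIso (i.stalkMap q), Scheme.SpecMap_stalkMap_fromSpecStalk i⟩
  obtain ⟨R, τ, e, he, hR⟩ : ∃ (R : CommRingCat) (τ : A ⟶ R) (e : X.presheaf.stalk x ≅ R),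
      Spec.map e.hom ≫ X.fromSpecStalk x = Spec.map τ ≫ i ∧
        @IsLocalization.AtPrime _ _ R _ τ.hom.toAlgebra p.asIdeal _ := by
    obtain ⟨e, he⟩ := hiso p hx
    exact ⟨_, StructureSheaf.toStalk A p, e,
      he.trans (congrArg (· ≫ i) (Spec.fromSpecStalk_eq' _ _)),
      StructureSheaf.IsLocalization.to_stalk A p⟩
  refine ⟨τ ≫ e.inv, ?_, ?_⟩
  · rw [Spec.map_comp, Category.assoc, ← he, ← Spec.map_comp_assoc, e.hom_inv_id, Spec.map_id,
      Category.id_comp]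
  · let := τ.hom.toAlgebra
    let := (τ ≫ e.inv).hom.toAlgebra
    exact IsLocalization.isLocalization_of_algEquiv p.asIdeal.primeCompl
      (AlgEquiv.ofRingEquiv (f := e.symm.commRingCatIsoToRingEquiv) fun _ ↦ rfl)

lemma ptCodim_eq_height (i : Spec A ⟶ X) [IsOpenImmersion i] {p : PrimeSpectrum A} {x : X}
    (hx : i p = x) : ptCodim x = p.asIdeal.height := by
  obtain ⟨ψ, -, hψ⟩ := exists_isLocalization_stalk i hx
  let := ψ.hom.toAlgebra
  exact IsLocalization.AtPrime.ringKrullDim_eq_height p.asIdeal _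

lemma exists_functionField_iso_of_isOpenImmersion [IsIntegral X] (i : Spec A ⟶ X)
    [IsOpenImmersion i] [IsDomain A] (K : Type u) [Field K] [Algebra A K] [IsFractionRing A K] :
    ∃ φ : X.functionField ≅ .of K, Spec.map φ.hom ≫ X.fromSpecStalk (genericPoint X) =
      Spec.map (CommRingCat.ofHom (algebraMap A K)) ≫ i := by
  have hη : i (⊥ : PrimeSpectrum A) = genericPoint X := by
    rw [← genericPoint_eq_bot_of_affine]
    exact genericPoint_eq_of_isOpenImmersion i
  obtain ⟨ψ, hψ, hloc⟩ := exists_isLocalization_stalk i hη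
  have hbot : (⊥ : PrimeSpectrum A).asIdeal.primeCompl = nonZeroDivisors A := Ideal.primeCompl_bot
  rw [IsLocalization.AtPrime, hbot] at hloc
  let := ψ.hom.toAlgebra
  let e : X.functionField ≃ₐ[A] K := IsLocalization.algEquiv (nonZeroDivisors A) _ _
  have he : ψ ≫ e.toRingEquiv.toCommRingCatIso.hom = CommRingCat.ofHom (algebraMap A K) :=
    CommRingCat.hom_ext (RingHom.ext e.commutes)
  exact ⟨e.toRingEquiv.toCommRingCatIso, by rw [← hψ, ← Spec.map_comp_assoc, he]⟩

end AffineChart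

section Model

/-- The model is obtained from coordinates of the function field `K` for which the centre of `R` has
height at most one, and `l` sends the closed point of `Spec R` to that centre. -/
theorem exists_normal_projective_model_ptCodim_le_one (K R L : Type) [Field K] [Field L]
    [Algebra ℂ K] [Algebra K L] [Algebra ℂ L] [IsScalarTower ℂ K L] [CommRing R] [IsDomain R]
    [Algebra ℂ R] [Algebra R L] [IsFractionRing R L] [IsScalarTower ℂ R L]
    [IsDiscreteValuationRing R] [Algebra.EssFiniteType ℂ K] [Algebra.EssFiniteType ℂ R] :
    ∃ (X : Scheme) (sX : X ⟶ Spec (.of ℂ)) (_ : IsIntegral X) (φ : X.functionField ≅ .of K)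
      (l : Spec (.of R) ⟶ X), IsProjectiveVariety X sX ∧ IsNormalScheme X ∧
      Spec.map φ.hom ≫ X.fromSpecStalk (genericPoint X) ≫ sX =
        Spec.map (CommRingCat.ofHom (algebraMap ℂ K)) ∧
      Spec.map (CommRingCat.ofHom (algebraMap R L)) ≫ l =
        Spec.map (CommRingCat.ofHom (algebraMap K L)) ≫ Spec.map φ.hom ≫
          X.fromSpecStalk (genericPoint X) ∧
      ptCodim (l (closedPoint R)) ≤ 1 := by
  obtain ⟨N, z, hz0, hz, hnormal, htop, j, hj, hheight⟩ :=
    exists_normal_projective_coordinates_height_comap_le_one ℂ K R L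
  obtain ⟨X, sX, ι, hX, hXnormal, hι, hιX⟩ := exists_normal_projective_model hz0 hz
  have : IsIntegral X := hX.1
  have : IntermediateField.adjoin ℂ
      (Set.range (algebraMap (Algebra.adjoin ℂ (Set.range z)) K)) = ⊤ := by
    refine top_unique (htop.symm.trans_le (IntermediateField.adjoin.mono ℂ _ _ ?_))
    rintro _ ⟨i, rfl⟩
    exact ⟨⟨z i, Algebra.subset_adjoin ⟨i, rfl⟩⟩, rfl⟩
  have := isFractionRing_of_adjoin_range_eq_top this
  obtain ⟨φ, hφ⟩ := exists_functionField_iso_of_isOpenImmersion ι K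
  refine ⟨X, sX, ‹_›, φ, Spec.map (CommRingCat.ofHom j.toRingHom) ≫ ι, hX, hXnormal, ?_, ?_, ?_⟩
  · rw [reassoc_of% hφ, hιX, ← Spec.map_comp, ← CommRingCat.ofHom_comp]
    rfl
  · rw [hφ, ← Spec.map_comp_assoc, ← Spec.map_comp_assoc]
    congr 2
    ext b
    exact hj b
  · exact (ptCodim_eq_height ι (p := .comap j.toRingHom (closedPoint R)) rfl).trans_le
      (mod_cast hheight)

end Model

section StalkAlgebra

variable {k : CommRingCat.{u}} {X : Scheme.{u}}

/-- The `k`-algebra structure on the stalk at a point of a scheme over `Spec k`. -/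
abbrev stalkAlgebra (sX : X ⟶ Spec k) (x : X) : Algebra k (X.presheaf.stalk x) :=
  (Spec.preimage (X.fromSpecStalk x ≫ sX)).hom.toAlgebra

lemma SpecMap_algebraMap_stalkAlgebra (sX : X ⟶ Spec k) (x : X) :
    letI := stalkAlgebra sX x
    Spec.map (CommRingCat.ofHom (algebraMap k (X.presheaf.stalk x))) = X.fromSpecStalk x ≫ sX :=
  Spec.map_preimage _

lemma essFiniteType_stalkAlgebra (sX : X ⟶ Spec k) [LocallyOfFiniteType sX] (x : X) :
    letI := stalkAlgebra sX x
    Algebra.EssFiniteType k (X.presheaf.stalk x) := by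
  obtain ⟨p, hp⟩ : ∃ p : PrimeSpectrum k, 𝟙 (Spec k) p = sX x := ⟨sX x, rfl⟩
  obtain ⟨τ, hτ, hloc⟩ := exists_isLocalization_stalk (𝟙 (Spec k)) hp
  have hess : τ.hom.EssFiniteType :=
    letI := τ.hom.toAlgebra
    Algebra.EssFiniteType.of_isLocalization _ p.asIdeal.primeCompl
  have hcomp : Spec.preimage (X.fromSpecStalk x ≫ sX) = τ ≫ sX.stalkMap x := by
    apply Spec.map_injective
    rw [Spec.map_preimage, Spec.map_comp, ← Category.comp_id (Spec.map τ), hτ,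
      Scheme.SpecMap_stalkMap_fromSpecStalk]
  have : (Spec.preimage (X.fromSpecStalk x ≫ sX)).hom.EssFiniteType := by
    rw [hcomp, CommRingCat.hom_comp]
    exact hess.comp (LocallyOfFiniteType.stalkMap sX x)
  exact this

end StalkAlgebra

lemma isDiscreteValuationRing_of_ringKrullDim_eq_one (R : Type*) [CommRing R] [IsDomain R]
    [IsLocalRing R] [IsNoetherianRing R] [IsIntegrallyClosed R] (h : ringKrullDim R = 1) :
    IsDiscreteValuationRing R := by
  have hfield : ¬ IsField R := fun hR ↦
    zero_ne_one ((ringKrullDim_eq_zero_of_isField hR).symm.trans h)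
  have : Ring.KrullDimLE 1 R := by
    rw [Ring.krullDimLE_iff, h, Nat.cast_one]
  have hiff : IsDiscreteValuationRing R ↔
      IsIntegrallyClosed R ∧ ∃! P : Ideal R, P ≠ ⊥ ∧ P.IsPrime :=
    (IsDiscreteValuationRing.TFAE R hfield).out 0 3
  refine hiff.mpr ⟨inferInstance, maximalIdeal R,
    ⟨fun h ↦ hfield (IsLocalRing.isField_iff_maximalIdeal_eq.mpr h), inferInstance⟩, fun P hP ↦ ?_⟩
  exact IsLocalRing.eq_maximalIdeal (hP.2.isMaximal_of_ne_bot hP.1)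

lemma isScalarTower_stalkAlgebra {k : CommRingCat.{u}} {X Y : Scheme.{u}} {sX : X ⟶ Spec k}
    {sY : Y ⟶ Spec k} {x : X} {y : Y} {φ : Y.presheaf.stalk y ⟶ X.presheaf.stalk x}
    (hφ : Spec.map φ ≫ Y.fromSpecStalk y ≫ sY = X.fromSpecStalk x ≫ sX) :
    letI := stalkAlgebra sX x
    letI := stalkAlgebra sY y
    letI := φ.hom.toAlgebra
    IsScalarTower k (Y.presheaf.stalk y) (X.presheaf.stalk x) := by
  have hcomp : Spec.preimage (X.fromSpecStalk x ≫ sX) =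
      Spec.preimage (Y.fromSpecStalk y ≫ sY) ≫ φ := by
    apply Spec.map_injective
    rw [Spec.map_preimage, Spec.map_comp, Spec.map_preimage, hφ]
  let := stalkAlgebra sX x
  let := stalkAlgebra sY y
  let := φ.hom.toAlgebra
  exact .of_algebraMap_eq' (congrArg CommRingCat.Hom.hom hcomp)

theorem exists_partialIso_comp_equiv_ptCodim_le_one {Y S : Scheme} [IsIntegral Y] [IsIntegral S]
    (sY : Y ⟶ Spec (.of ℂ)) (sS : S ⟶ Spec (.of ℂ)) [LocallyOfFiniteType sY]
    [LocallyOfFiniteType sS] (f : Y.PartialMap S) [IsDominant f.hom]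
    (hf : f.hom ≫ sS = f.domain.ι ≫ sY) {y : Y} [IsIntegrallyClosed (Y.presheaf.stalk y)]
    (hy : ptCodim y = 1) :
    ∃ (S' : Scheme) (sS' : S' ⟶ Spec (.of ℂ)), IsProjectiveVariety S' sS' ∧ IsNormalScheme S' ∧
      ∃ (e : S.PartialIso S') (f' : Y.PartialMap S') (hy : y ∈ f'.domain),
        e.IsOver sS sS' ∧ (f.comp e.toPartialMap).equiv f' ∧ ptCodim (f'.hom ⟨y, hy⟩) ≤ 1 := by
  have : IsNoetherianRing (CommRingCat.of ℂ) := inferInstanceAs (IsNoetherianRing ℂ)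
  have : IsLocallyNoetherian Y := LocallyOfFiniteType.isLocallyNoetherian sY
  have : IsDiscreteValuationRing (Y.presheaf.stalk y) :=
    isDiscreteValuationRing_of_ringKrullDim_eq_one _ hy
  obtain ⟨φ, hφ⟩ := exists_fromFunctionField_eq f
  have hφk := fromFunctionField_comp_of_comp_eq f hf
  rw [hφ, Category.assoc] at hφk
  let := stalkAlgebra sS (genericPoint S)
  let := stalkAlgebra sY (genericPoint Y)
  let := stalkAlgebra sY y
  let : Algebra S.functionField Y.functionField := φ.hom.toAlgebra
  have := isScalarTower_stalkAlgebra hφk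
  have : IsScalarTower (CommRingCat.of ℂ) (Y.presheaf.stalk y) Y.functionField :=
    isScalarTower_stalkAlgebra (by rw [Scheme.SpecMap_stalkSpecializes_fromSpecStalk_assoc])
  have := essFiniteType_stalkAlgebra sS (genericPoint S)
  have := essFiniteType_stalkAlgebra sY y
  obtain ⟨S', sS', _, ψ, l, hS', hnormal, hψ, hl, hcodim⟩ :=
    exists_normal_projective_model_ptCodim_le_one S.functionField (Y.presheaf.stalk y)
      Y.functionField
  have : LocallyOfFiniteType sS' := hS'.2.1
  have hψk := hψ.trans (SpecMap_algebraMap_stalkAlgebra sS (genericPoint S))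
  obtain ⟨e, he, heη⟩ := exists_partialIso_of_functionField_iso sS sS' ψ hψk
  have hη : (f.comp e.toPartialMap).fromFunctionField =
      Spec.map φ ≫ Spec.map ψ.hom ≫ S'.fromSpecStalk (genericPoint S') :=
    (fromFunctionField_comp_of_eq f _ hφ).trans (congrArg _ heη)
  have hηk : (f.comp e.toPartialMap).fromFunctionField ≫ sS' =
      Y.fromSpecStalk (genericPoint Y) ≫ sY := by
    rw [hη, Category.assoc, Category.assoc, hψk, hφk]
  obtain ⟨f', hyf', hequiv, hl'⟩ :=
    exists_equiv_fromSpecStalkOfMem_eq sY sS' _ hηk l (hl.trans hη.symm)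
  refine ⟨S', sS', hS', hnormal, e, f', hyf', he, hequiv, ?_⟩
  rw [← hl'] at hcodim
  exact (congrArg ptCodim (fromSpecStalkOfMem_comp_closedPoint hyf' f'.hom)).symm.trans_le hcodim

theorem exists_model_where_codim_one_point_maps_to_codim_le_one_point_general
    {Y S : Scheme} [IsIntegral Y] [IsIntegral S] (sY : Y ⟶ Spec (.of ℂ)) (sS : S ⟶ Spec (.of ℂ))
    [LocallyOfFiniteType sY] [LocallyOfFiniteType sS]
    (U : Y.Opens) (hU : U ≠ ⊥) (fU : (U : Scheme) ⟶ S) (hdom : Dense (Set.range fU.base))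
    (hover : fU ≫ sS = U.ι ≫ sY)
    (y : Y) [IsIntegrallyClosed (Y.presheaf.stalk y)] (hy : ptCodim y = 1) :
    ∃ (S' : Scheme) (sS' : S' ⟶ Spec (.of ℂ)), IsProjectiveVariety S' sS' ∧ IsNormalScheme S' ∧
      ∃ (V : S.Opens) (V' : S'.Opens) (_ : V ≠ ⊥) (_ : V' ≠ ⊥) (e : (V : Scheme) ≅ (V' : Scheme)),
        e.hom ≫ V'.ι ≫ sS' = V.ι ≫ sS ∧
        ∃ (W : Y.Opens) (hyW : y ∈ W) (f' : (W : Scheme) ⟶ S'),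
          (∃ (T : Y.Opens) (_ : T ≠ ⊥) (hTU : T ≤ U) (hTW : T ≤ W)
            (g : (T : Scheme) ⟶ (V : Scheme)), g ≫ V.ι = Y.homOfLE hTU ≫ fU ∧
              g ≫ e.hom ≫ V'.ι = Y.homOfLE hTW ≫ f') ∧
          ptCodim (f'.base ⟨y, hyW⟩) ≤ 1 := by
  let f : Y.PartialMap S := ⟨U, U.2.dense (U.ne_bot_iff_nonempty.mp hU), fU⟩
  have : IsDominant f.hom := ⟨hdom⟩
  obtain ⟨S', sS', hS', hnormal, e, f', hyf', he, hequiv, hcodim⟩ :=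
    exists_partialIso_comp_equiv_ptCodim_le_one sY sS f hover hy
  obtain ⟨T, hT, hTU, hTW, g, hgf, hgf'⟩ := exists_comp_eq_of_comp_toPartialMap_equiv f e f' hequiv
  have : IsIntegral S' := hS'.1
  have hne {X : Scheme} [Nonempty X] {V : X.Opens} (hV : Dense (V : Set X)) : V ≠ ⊥ :=
    V.ne_bot_iff_nonempty.mpr hV.nonempty
  exact ⟨S', sS', hS', hnormal, e.source, e.target, hne e.dense_source, hne e.dense_target, e.iso,
    he, f'.domain, hyf', f'.hom, ⟨T, hne hT, hTU, hTW, g, hgf, hgf'⟩, hcodim⟩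

/-- **Lemma 5.2 (Schreieder; after Merkurjev).**  Let `f : Y ⇢ S` be a dominant rational
map between normal complex projective varieties (represented by a morphism `fU` on a dense
open subset `U ⊆ Y`), and let `y ∈ Y` be a point of codimension one.  Then there is a
normal projective variety `S'`, birational to `S`, such that the induced rational map
`f' : Y ⇢ S'` is defined at `y` and maps `y` either to the generic point of `S'` or to the
generic point of a divisor on `S'` (i.e. to a point of codimension at most one). -/
theorem exists_model_where_codim_one_point_maps_to_codim_le_one_point
    (Y S : Scheme) (sY : Y ⟶ Spec (.of ℂ)) (sS : S ⟶ Spec (.of ℂ))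
    (hY : IsProjectiveVariety Y sY) (hS : IsProjectiveVariety S sS)
    (hYnormal : IsNormalScheme Y) (hSnormal : IsNormalScheme S)
    (U : Y.Opens) (hU : U ≠ ⊥) (fU : (U : Scheme) ⟶ S)
    (hdom : Dense (Set.range fU.base))
    (hover : fU ≫ sS = U.ι ≫ sY)
    (y : Y) (hy : ptCodim y = 1) :
    ∃ (S' : Scheme) (sS' : S' ⟶ Spec (.of ℂ)),
      IsProjectiveVariety S' sS' ∧ IsNormalScheme S' ∧
      -- `S'` is birational to `S`, via an isomorphism of dense open subsets over `ℂ`: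
      ∃ (V : S.Opens) (V' : S'.Opens) (hV : V ≠ ⊥) (hV' : V' ≠ ⊥)
        (e : (V : Scheme) ≅ (V' : Scheme)),
        e.hom ≫ V'.ι ≫ sS' = V.ι ≫ sS ∧
        -- the induced rational map `f' : Y ⇢ S'` is defined on an open set `W ∋ y` …
        ∃ (W : Y.Opens) (hyW : y ∈ W) (f' : (W : Scheme) ⟶ S'),
          -- … agrees with `fU` (via `e`) on a dense common open subset …
          (∃ (T : Y.Opens) (hT : T ≠ ⊥) (hTU : T ≤ U) (hTW : T ≤ W)
            (g : (T : Scheme) ⟶ (V : Scheme)),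
              g ≫ V.ι = Y.homOfLE hTU ≫ fU ∧
              g ≫ e.hom ≫ V'.ι = Y.homOfLE hTW ≫ f') ∧
          -- … and maps `y` to a point of codimension at most one:
          ptCodim (f'.base ⟨y, hyW⟩) ≤ 1 := by
  have ⟨_, _, _, _⟩ := hY
  have ⟨_, _, _, _⟩ := hS
  have := hYnormal y
  exact exists_model_where_codim_one_point_maps_to_codim_le_one_point_general
    sY sS U hU fU hdom hover y hy
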